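/- arXiv:1401.0500 — 2 statements merged into one kernel-verified Lean document; each statement's English description precedes it below -/
import Mathlib

section
/- There exists a finite matroid M such that: (i) M satisfies the 4th Kinser (Ingleton) inequality for every family of four subsets of its ground set; (ii) M violates the 5th Kinser inequality for some family of five subsets of its ground set; and (iii) the dual matroid M* satisfies the 5th Kinser inequality for every family of five subsets of its ground set. That is, M ∈ K_4 − K_5 while M* ∈ K_5. -/
open Finset

universe u v

namespace Matroid

variable {α : Type*}

/-- The rank of a set in a matroid: the cardinality of a largest independent subset. -/
noncomputable def rnk (M : Matroid α) (X : Set α) : ℕ :=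
  sSup {n : ℕ | ∃ I, M.Indep I ∧ I ⊆ X ∧ I.ncard = n}

/-- The `n`-th Kinser inequality for the family `X 1, …, X n`. -/
def KinserIneq (M : Matroid α) (n : ℕ) (X : ℕ → Set α) : Prop :=
  (∑ i ∈ Finset.Icc 3 n, M.rnk (X i)) + M.rnk (X 1 ∪ X 2) + M.rnk (X 1 ∪ X 3 ∪ X n)
      + ∑ i ∈ Finset.Icc 4 n, M.rnk (X 2 ∪ X (i - 1) ∪ X i)
    ≤ M.rnk (X 1 ∪ X 3) + M.rnk (X 1 ∪ X n)
      + (∑ i ∈ Finset.Icc 3 n, M.rnk (X 2 ∪ X i))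
      + ∑ i ∈ Finset.Icc 4 n, M.rnk (X (i - 1) ∪ X i)

/-- `M` lies in the Kinser class `K n`: the `n`-th Kinser inequality holds for every
family of `n` subsets of the ground set. -/
def MemKinserClass (M : Matroid α) (n : ℕ) : Prop :=
  ∀ X : ℕ → Set α, (∀ i ∈ Finset.Icc 1 n, X i ⊆ M.E) → M.KinserIneq n X

/-- `M` is (isomorphic to) the matroid of linear dependence of a family of vectors of a
vector space over `𝔽`. -/
def IsRepOver {α : Type u} (M : Matroid α) (𝔽 : Type v) [Field 𝔽] : Prop :=
  ∃ (W : Type (max u v)) (_ : AddCommGroup W) (_ : Module 𝔽 W) (φ : α → W),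
    ∀ I : Set α, M.Indep I ↔ I ⊆ M.E ∧ LinearIndependent 𝔽 (fun x : I => φ x.1)

/-- Deletion of a set of elements from a matroid. -/
def del (M : Matroid α) (D : Set α) : Matroid α := M ↾ (M.E \ D)

/-- Contraction of a set of elements in a matroid. -/
def con (M : Matroid α) (C : Set α) : Matroid α := (M✶ ↾ (M✶.E \ C))✶

/-- `N` is a minor of `M`: it is obtained from `M` by contractions and deletions. -/
def IsMinorOf (N M : Matroid α) : Prop :=
  ∃ C D : Set α, C ⊆ M.E ∧ D ⊆ M.E ∧ Disjoint C D ∧ N = (M.con C).del D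

/-- `N` is a proper minor of `M`: at least one element is deleted or contracted. -/
def IsProperMinorOf (N M : Matroid α) : Prop :=
  ∃ C D : Set α, C ⊆ M.E ∧ D ⊆ M.E ∧ Disjoint C D ∧ (C ∪ D).Nonempty ∧
    N = (M.con C).del D

/-- A matroid isomorphism: a bijection of ground sets preserving independence. -/
def IsIsoTo {β : Type*} (M : Matroid α) (N : Matroid β) : Prop :=
  ∃ f : α → β, Set.BijOn f M.E N.E ∧ ∀ I ⊆ M.E, (M.Indep I ↔ N.Indep (f '' I))

/-- The Ingleton inequality (the 4th Kinser inequality) for four subsets. -/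
def IngletonIneq (M : Matroid α) (X₁ X₂ X₃ X₄ : Set α) : Prop :=
  M.rnk X₃ + M.rnk X₄ + M.rnk (X₁ ∪ X₂) + M.rnk (X₁ ∪ X₃ ∪ X₄) + M.rnk (X₂ ∪ X₃ ∪ X₄)
    ≤ M.rnk (X₁ ∪ X₃) + M.rnk (X₁ ∪ X₄) + M.rnk (X₂ ∪ X₃) + M.rnk (X₂ ∪ X₄)
      + M.rnk (X₃ ∪ X₄)

end Matroid

namespace KinserAux

/-- The properties of a rank function (of rank 5, with a distinguished family `L` of
circuit-hyperplanes) that are used below. -/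
structure RankLike (ρ : Set (Fin 10) → ℕ) : Prop where
  mono : ∀ A B, A ⊆ B → ρ A ≤ ρ B
  submod : ∀ A B, ρ (A ∪ B) + ρ (A ∩ B) ≤ ρ A + ρ B
  le_five : ∀ A, ρ A ≤ 5

/-- The Ingleton inequality. -/
def Ing (ρ : Set (Fin 10) → ℕ) : Prop := ∀ A B C D : Set (Fin 10),
  ρ C + ρ D + ρ (A ∪ B) + ρ (A ∪ C ∪ D) + ρ (B ∪ C ∪ D)
    ≤ ρ (A ∪ C) + ρ (A ∪ D) + ρ (B ∪ C) + ρ (B ∪ D) + ρ (C ∪ D)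

variable {ρ : Set (Fin 10) → ℕ}

theorem RankLike.sub (h : RankLike ρ) (A B C D : Set (Fin 10))
    (hC : C ⊆ A ∪ B := by tauto_set) (hD : D ⊆ A ∩ B := by tauto_set) :
    ρ C + ρ D ≤ ρ A + ρ B := by
  have := h.submod A B
  have := h.mono _ _ hC
  have := h.mono _ _ hD
  omega

theorem Ing.ing (hI : Ing ρ) (h : RankLike ρ) (A B C D AB ACD BCD AC AD BC BD CD : Set (Fin 10))
    (h1 : AB ⊆ A ∪ B := by tauto_set) (h2 : ACD ⊆ A ∪ C ∪ D := by tauto_set)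
    (h3 : BCD ⊆ B ∪ C ∪ D := by tauto_set) (h4 : A ∪ C ⊆ AC := by tauto_set)
    (h5 : A ∪ D ⊆ AD := by tauto_set) (h6 : B ∪ C ⊆ BC := by tauto_set)
    (h7 : B ∪ D ⊆ BD := by tauto_set) (h8 : C ∪ D ⊆ CD := by tauto_set) :
    ρ C + ρ D + ρ AB + ρ ACD + ρ BCD ≤ ρ AC + ρ AD + ρ BC + ρ BD + ρ CD := by
  have := hI A B C D
  have := h.mono _ _ h1
  have := h.mono _ _ h2
  have := h.mono _ _ h3
  have := h.mono _ _ h4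
  have := h.mono _ _ h5
  have := h.mono _ _ h6
  have := h.mono _ _ h7
  have := h.mono _ _ h8
  omega

/-- A pair of sets is good if its union is spanning or the pair is modular. -/
def Good (ρ : Set (Fin 10) → ℕ) (X Y : Set (Fin 10)) : Prop :=
  ρ (X ∪ Y) = 5 ∨ ρ (X ∪ Y) + ρ (X ∩ Y) = ρ X + ρ Y

theorem Good.symm {X Y : Set (Fin 10)} (h : Good ρ X Y) : Good ρ Y X := by
  unfold Good at *
  rwa [Set.union_comm, Set.inter_comm, add_comm (ρ Y)]

theorem ing_of_good34 (h : RankLike ρ) (A B C D : Set (Fin 10)) (hg : Good ρ C D) :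
    ρ C + ρ D + ρ (A ∪ B) + ρ (A ∪ C ∪ D) + ρ (B ∪ C ∪ D)
    ≤ ρ (A ∪ C) + ρ (A ∪ D) + ρ (B ∪ C) + ρ (B ∪ D) + ρ (C ∪ D) := by
  rcases hg with hg | hg
  · have := h.sub (A ∪ C) (B ∪ C) (A ∪ B ∪ C) C
    have := h.sub (A ∪ D) (B ∪ D) (A ∪ B ∪ D) D
    have := h.sub (A ∪ B ∪ C) (A ∪ B ∪ D) (C ∪ D) (A ∪ B)
    have := h.le_five (A ∪ C ∪ D)
    have := h.le_five (B ∪ C ∪ D)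
    omega
  · have := h.sub (A ∪ C) (A ∪ D) (A ∪ C ∪ D) (A ∪ (C ∩ D))
    have := h.sub (B ∪ C) (B ∪ D) (B ∪ C ∪ D) (B ∪ (C ∩ D))
    have := h.sub (A ∪ (C ∩ D)) (B ∪ (C ∩ D)) (A ∪ B) (C ∩ D)
    omega

theorem ing_of_good13 (h : RankLike ρ) (A B C D : Set (Fin 10)) (hg : Good ρ A C) :
    ρ C + ρ D + ρ (A ∪ B) + ρ (A ∪ C ∪ D) + ρ (B ∪ C ∪ D)
    ≤ ρ (A ∪ C) + ρ (A ∪ D) + ρ (B ∪ C) + ρ (B ∪ D) + ρ (C ∪ D) := by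
  rcases hg with hg | hg
  · have := h.sub (B ∪ C) (C ∪ D) (B ∪ C ∪ D) C
    have := h.sub (A ∪ D) (B ∪ D) (A ∪ B) D
    have := h.le_five (A ∪ C ∪ D)
    omega
  · have := h.sub (A ∪ D) (C ∪ D) (A ∪ C ∪ D) (D ∪ (A ∩ C))
    have := h.sub A (B ∪ (A ∩ C)) (A ∪ B) (A ∩ C)
    have := h.sub (D ∪ (A ∩ C)) (B ∪ D) (B ∪ D ∪ (A ∩ C)) D
    have := h.sub (B ∪ D ∪ (A ∩ C)) (B ∪ C) (B ∪ C ∪ D) (B ∪ (A ∩ C))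
    omega

theorem ing_of_good14 (h : RankLike ρ) (A B C D : Set (Fin 10)) (hg : Good ρ A D) :
    ρ C + ρ D + ρ (A ∪ B) + ρ (A ∪ C ∪ D) + ρ (B ∪ C ∪ D)
    ≤ ρ (A ∪ C) + ρ (A ∪ D) + ρ (B ∪ C) + ρ (B ∪ D) + ρ (C ∪ D) := by
  have := ing_of_good13 h A B D C hg
  rw [Set.union_right_comm A D C, Set.union_right_comm B D C, Set.union_comm D C] at this
  omega

theorem ing_of_good23 (h : RankLike ρ) (A B C D : Set (Fin 10)) (hg : Good ρ B C) :
    ρ C + ρ D + ρ (A ∪ B) + ρ (A ∪ C ∪ D) + ρ (B ∪ C ∪ D)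
    ≤ ρ (A ∪ C) + ρ (A ∪ D) + ρ (B ∪ C) + ρ (B ∪ D) + ρ (C ∪ D) := by
  have := ing_of_good13 h B A C D hg
  rw [Set.union_comm B A] at this
  omega

theorem ing_of_good24 (h : RankLike ρ) (A B C D : Set (Fin 10)) (hg : Good ρ B D) :
    ρ C + ρ D + ρ (A ∪ B) + ρ (A ∪ C ∪ D) + ρ (B ∪ C ∪ D)
    ≤ ρ (A ∪ C) + ρ (A ∪ D) + ρ (B ∪ C) + ρ (B ∪ D) + ρ (C ∪ D) := by
  have := ing_of_good14 h B A C D hg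
  rw [Set.union_comm B A] at this
  omega

/-- The fifth Kinser inequality for five sets. -/
def Kin (ρ : Set (Fin 10) → ℕ) (A B C D E : Set (Fin 10)) : Prop :=
  ρ C + ρ D + ρ E + ρ (A ∪ B) + ρ (A ∪ C ∪ E) + ρ (B ∪ C ∪ D) + ρ (B ∪ D ∪ E)
    ≤ ρ (A ∪ C) + ρ (A ∪ E) + ρ (B ∪ C) + ρ (B ∪ D) + ρ (B ∪ E) + ρ (C ∪ D) + ρ (D ∪ E)

theorem Kin.swap {A B C D E : Set (Fin 10)} (h : Kin ρ A B E D C) : Kin ρ A B C D E := by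
  unfold Kin at *
  rw [Set.union_right_comm A E C, Set.union_right_comm B E D, Set.union_right_comm B D C,
    Set.union_comm D C, Set.union_comm E D] at h
  omega

theorem kin_of_good23 (h : RankLike ρ) (hI : Ing ρ) (A B C D E : Set (Fin 10))
    (hg : Good ρ B C) : Kin ρ A B C D E := by
  unfold Kin
  rcases hg with hg | hg
  · have := h.sub (A ∪ B ∪ C ∪ E) (A ∪ C ∪ D ∪ E) (B ∪ C) (A ∪ C ∪ E)
    have := hI.ing h A B D E (A ∪ B) (A ∪ D ∪ E) (B ∪ D ∪ E) (A ∪ D) (A ∪ E) (B ∪ D) (B ∪ E)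
      (D ∪ E)
    have := hI.ing h A D C (A ∪ E) (A ∪ D) (A ∪ C ∪ E) (A ∪ C ∪ D ∪ E) (A ∪ C) (A ∪ E) (C ∪ D)
      (A ∪ D ∪ E) (A ∪ C ∪ E)
    have := h.le_five (B ∪ C ∪ D)
    have := h.le_five (A ∪ B ∪ C ∪ E)
    omega
  · have := h.sub (A ∪ (B ∩ C)) B (A ∪ B) (B ∩ C)
    have := h.sub (B ∪ D) (C ∪ D) (B ∪ C ∪ D) (D ∪ (B ∩ C))
    have := hI.ing h E (B ∩ C) B D (E ∪ (B ∩ C)) (B ∪ D ∪ E) (B ∪ D) (B ∪ E) (D ∪ E) B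
      (D ∪ (B ∩ C)) (B ∪ D)
    have := hI.ing h A (B ∩ C) C E (A ∪ (B ∩ C)) (A ∪ C ∪ E) (C ∪ E) (A ∪ C) (A ∪ E) C
      (E ∪ (B ∩ C)) (C ∪ E)
    omega

theorem kin_of_good24 (h : RankLike ρ) (hI : Ing ρ) (A B C D E : Set (Fin 10))
    (hg : Good ρ B D) : Kin ρ A B C D E := by
  unfold Kin
  rcases hg with hg | hg
  · have := hI.ing h A B C E (A ∪ B) (A ∪ C ∪ E) (B ∪ C ∪ E) (A ∪ C) (A ∪ E) (B ∪ C) (B ∪ E)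
      (C ∪ E)
    have := hI.ing h C E (B ∪ C) D (C ∪ E) (B ∪ C ∪ D) (B ∪ D) (B ∪ C) (C ∪ D) (B ∪ C ∪ E)
      (D ∪ E) (B ∪ C ∪ D)
    have := h.le_five (B ∪ D ∪ E)
    have := h.le_five (B ∪ C ∪ D)
    omega
  · have := hI.ing h B (D ∪ E) (C ∪ E) (E ∪ (B ∩ D)) (B ∪ D ∪ E) (B ∪ C ∪ E) (C ∪ D ∪ E)
      (B ∪ C ∪ E) (B ∪ E) (C ∪ D ∪ E) (D ∪ E) (C ∪ E ∪ (B ∩ D))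
    have := h.sub (B ∪ C) (C ∪ D) (B ∪ C ∪ D) (C ∪ (B ∩ D))
    have := h.sub (A ∪ (B ∩ D)) B (A ∪ B) (B ∩ D)
    have := hI.ing h A (B ∩ D) C E (A ∪ (B ∩ D)) (A ∪ C ∪ E) (C ∪ E ∪ (B ∩ D)) (A ∪ C) (A ∪ E)
      (C ∪ (B ∩ D)) (E ∪ (B ∩ D)) (C ∪ E)
    omega

theorem kin_of_good34 (h : RankLike ρ) (hI : Ing ρ) (A B C D E : Set (Fin 10))
    (hg : Good ρ C D) : Kin ρ A B C D E := by
  unfold Kin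
  rcases hg with hg | hg
  · have := hI.ing h A B C E (A ∪ B) (A ∪ C ∪ E) (B ∪ C ∪ E) (A ∪ C) (A ∪ E) (B ∪ C) (B ∪ E)
      (C ∪ E)
    have := hI.ing h B (D ∪ E) D (C ∪ E) (B ∪ D ∪ E) (C ∪ D) (C ∪ D) (B ∪ D) (B ∪ C ∪ E)
      (D ∪ E) (C ∪ D ∪ E) (C ∪ D ∪ E)
    have := h.le_five (B ∪ C ∪ D)
    have := h.le_five (C ∪ D ∪ E)
    omega
  · have := hI.ing h A B E (C ∩ D) (A ∪ B) (A ∪ E ∪ (C ∩ D)) (B ∪ E ∪ (C ∩ D)) (A ∪ E)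
      (A ∪ (C ∩ D)) (B ∪ E) (B ∪ (C ∩ D)) (E ∪ (C ∩ D))
    have := h.sub (A ∪ C) (A ∪ E ∪ (C ∩ D)) (A ∪ C ∪ E) (A ∪ (C ∩ D))
    have := h.sub (D ∪ E) (B ∪ E ∪ (C ∩ D)) (B ∪ D ∪ E) (E ∪ (C ∩ D))
    have := h.sub (B ∪ C) (B ∪ D) (B ∪ C ∪ D) (B ∪ (C ∩ D))
    omega

end KinserAux

namespace KinserAux

/-- The subset of `Fin 10` encoded by a bit mask. -/
def toSet (x : ℕ) : Set (Fin 10) := {i | x.testBit i.val = true}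

/-- Number of elements of the set encoded by a mask. -/
def pc (x : ℕ) : ℕ := (Finset.univ.filter (fun i : Fin 10 => x.testBit i.val = true)).card

/-- Table look-up: the `x`-th hexadecimal digit. -/
def look (T x : ℕ) : ℕ := Nat.land (Nat.shiftRight T (Nat.mul 4 x)) 15

/-- The circuit-hyperplanes of `M`. -/
def LM : List ℕ := [569, 618, 409, 391, 482, 31, 103]

/-- The circuit-hyperplanes of the dual. -/
def LD : List ℕ := [454, 405, 614, 632, 541, 992, 920]

/-- The rank table of `M`, one hexadecimal digit for each subset. -/
def TM : ℕ :=
  3481296271377175022305842369055414608599880830157945934614111610946513026571767994311919867831074793022101910054874429651709666350074202321614330160822177923887782541177118374043088706642300714164068820478280517484740899580040810398882577819758645307839098205283917750069479704180717570472584493385752699529736217398196358998919209575696421849991148730755569088781529430511412549438963953472751552960900206305878644092345500416173994777562304152862205697704120028878700230899258254514948208929870667611730303720937997493257275487881844847062466833718683018294812211077263057899062492059107433191818843101806677498296818858074775681089869536625412571711804021779508135439952546615391392066487080237695173815047659259399503286901186973750647035708822045648279254537748962658836211231666211532073198509497597389259438131409332285729674674806339338953566655440804462336955229878017253416523743015887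81630282284303087502686276439188936231118193350540271107506264360260661065262159885447499037358606185563902241465848953891895387911355917598103873561510587486039886871813529700153603193201932453344829196428905117712836192493665252798476296687878821151424333932635479980971310302985607714534875435858558042583828534077580807296544300671248

/-- The rank table of the dual. -/
def TD : ℕ :=
  348129627137717502230584236905541460856918899940387671666531236136459976389196715698574729692140322726585925930494810343485975199590798216872257495993067550033841084010442539050006731872160249031768023457211518621700371224881630793084241907641415166857713308612474032371195390400096704847468986911570186800190081563829913017987818218380950198184222118795130253168176327105145341047136718035938999495136709363493387437056598442508517585149486983074953096973710039911449941481872718039434749013237201606623572607376866966505283019942362146526939256437858373192314368572759854427079906984847634908310725680957652801164334376295270871231283870620338025175572725965955181770173010310471173709579279794967932145399919379267390403030736200780776114756851704234900082076029899655445154085544940515415681851187711140577679377820652499138873204272641824860547948761078363706369648917866499364120733957460236586520845835130744963967506638540506466644396554350080556078057687954391409571717252164413611113207384031846795454433268080665229325909011321086891310155554437202568649507503900838801746846151406610855628155345223666072893375031976327872498139701561906186464627083333531238761375147004128826713373231093242983283570975933844648831820048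

/-- `T` is the rank table of the sparse paving matroid with circuit-hyperplanes `L`. -/
def tableOK (L : List ℕ) (T : ℕ) : Bool :=
  (List.range 1024).all fun x =>
    Nat.beq (look T x) (bif L.any (fun m => Nat.beq m x) then 4 else min (pc x) 5)

theorem tableOK_M : tableOK LM TM = true := by decide +kernel

theorem tableOK_D : tableOK LD TD = true := by decide +kernel

/-- The finite check for the Ingleton inequality. -/
def check4 (L : List ℕ) (T : ℕ) : Bool :=
  L.all fun c13 => L.all fun c14 => L.all fun c23 => L.all fun c24 => L.all fun c34 =>
    let y1 := Nat.land c13 c14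
    let y2 := Nat.land c23 c24
    let y3 := Nat.land (Nat.land c13 c23) c34
    let y4 := Nat.land (Nat.land c14 c24) c34
    !(Nat.beq (Nat.lor y1 y3) c13) || (!(Nat.beq (Nat.lor y1 y4) c14) ||
    (!(Nat.beq (Nat.lor y2 y3) c23) || (!(Nat.beq (Nat.lor y2 y4) c24) ||
    (!(Nat.beq (Nat.lor y3 y4) c34) ||
      Nat.ble (look T y3 + look T y4 + look T (Nat.lor y1 y2) +
        look T (Nat.lor (Nat.lor y1 y3) y4) + look T (Nat.lor (Nat.lor y2 y3) y4)) 20))))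

theorem check4_M : check4 LM TM = true := by decide +kernel

theorem check4_D : check4 LD TD = true := by decide +kernel

/-- The finite check for the fifth Kinser inequality. -/
def check5 (L : List ℕ) (T : ℕ) : Bool :=
  L.all fun c23 => L.all fun c24 => L.all fun c25 => L.all fun c34 => L.all fun c45 =>
    let y2 := Nat.land (Nat.land c23 c24) c25
    let y3 := Nat.land c23 c34
    let y4 := Nat.land (Nat.land c24 c34) c45
    let y5 := Nat.land c25 c45
    !(Nat.beq (Nat.lor y2 y3) c23) || (!(Nat.beq (Nat.lor y2 y4) c24) ||
    (!(Nat.beq (Nat.lor y2 y5) c25) || (!(Nat.beq (Nat.lor y3 y4) c34) ||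
    (!(Nat.beq (Nat.lor y4 y5) c45) ||
      (List.range 1024).all fun z =>
      Nat.ble (look T y3 + look T y4 + look T y5 + look T (Nat.lor z y2) +
        look T (Nat.lor (Nat.lor z y3) y5) + look T (Nat.lor (Nat.lor y2 y3) y4)
         + look T (Nat.lor (Nat.lor y2 y4) y5))
        (look T (Nat.lor z y3) + look T (Nat.lor z y5) + 20)))))

theorem check5_D : check5 LD TD = true := by decide +kernel

end KinserAux

namespace KinserAux

theorem mem_toSet (x : ℕ) (i : Fin 10) : i ∈ toSet x ↔ x.testBit i.val = true := Iff.rfl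

theorem toSet_lor (a b : ℕ) : toSet (Nat.lor a b) = toSet a ∪ toSet b := by
  ext i
  have : (Nat.lor a b).testBit i.val = (a.testBit i.val || b.testBit i.val) :=
    Nat.testBit_or a b i.val
  simp [mem_toSet]

theorem toSet_land (a b : ℕ) : toSet (Nat.land a b) = toSet a ∩ toSet b := by
  ext i
  have : (Nat.land a b).testBit i.val = (a.testBit i.val && b.testBit i.val) :=
    Nat.testBit_and a b i.val
  simp [mem_toSet]

theorem lor_lt {a b : ℕ} (ha : a < 1024) (hb : b < 1024) : Nat.lor a b < 1024 :=
  Nat.or_lt_two_pow (n := 10) ha hb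

theorem land_lt {a b : ℕ} (hb : b < 1024) : Nat.land a b < 1024 :=
  Nat.and_lt_two_pow (n := 10) a hb

theorem exists_mask (X : Set (Fin 10)) : ∃ x < 1024, toSet x = X := by
  classical
  refine ⟨Nat.ofBits (fun i : Fin 10 => decide (i ∈ X)), Nat.ofBits_lt_two_pow _, ?_⟩
  ext i
  rw [mem_toSet, Nat.testBit_ofBits_lt _ _ i.isLt]
  simp

theorem toSet_inj {x y : ℕ} (hx : x < 1024) (hy : y < 1024) (h : toSet x = toSet y) : x = y := by
  apply Nat.eq_of_testBit_eq
  intro i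
  by_cases hi : i < 10
  · have := Set.ext_iff.1 h ⟨i, hi⟩
    simp only [mem_toSet] at this
    exact Bool.eq_iff_iff.2 this
  · have h10 : 2 ^ 10 ≤ 2 ^ i := Nat.pow_le_pow_right (by norm_num) (by omega)
    rw [Nat.testBit_lt_two_pow (by omega), Nat.testBit_lt_two_pow (by omega)]

theorem ncard_toSet (x : ℕ) : (toSet x).ncard = pc x := by
  rw [pc, ← Set.ncard_coe_finset]
  congr 1
  ext i
  simp [mem_toSet]

/-- Membership in the family of circuit-hyperplanes given by a list of masks. -/
def InL (L : List ℕ) (X : Set (Fin 10)) : Prop := ∃ m ∈ L, toSet m = X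

/-- The list `L` gives the circuit-hyperplanes of a sparse paving matroid of rank 5. -/
structure SPList (L : List ℕ) : Prop where
  lt : ∀ m ∈ L, m < 1024
  card : ∀ m ∈ L, pc m = 5
  inter : ∀ m ∈ L, ∀ n ∈ L, m ≠ n → pc (Nat.land m n) ≤ 3

theorem spList_M : SPList LM := ⟨by decide +kernel, by decide +kernel, by decide +kernel⟩

theorem spList_D : SPList LD := ⟨by decide +kernel, by decide +kernel, by decide +kernel⟩

theorem SPList.ncard_eq {L : List ℕ} (hL : SPList L) {X : Set (Fin 10)} (h : InL L X) :
    X.ncard = 5 := by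
  obtain ⟨m, hm, rfl⟩ := h
  rw [ncard_toSet, hL.card m hm]

open Classical in
/-- `ρ` is the rank function of the sparse paving matroid given by `L`. -/
def IsRank (L : List ℕ) (ρ : Set (Fin 10) → ℕ) : Prop :=
  ∀ X, ρ X = if InL L X then 4 else min X.ncard 5

theorem IsRank.look_eq {L : List ℕ} {T : ℕ} {ρ : Set (Fin 10) → ℕ} (hL : SPList L)
    (hT : tableOK L T = true) (hρ : IsRank L ρ) {x : ℕ} (hx : x < 1024) :
    ρ (toSet x) = look T x := by
  have h1 := List.all_eq_true.1 hT x (List.mem_range.2 hx)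
  rw [Nat.eq_of_beq_eq_true h1, hρ, ncard_toSet]
  by_cases hm : x ∈ L
  · have : InL L (toSet x) := ⟨x, hm, rfl⟩
    have h2 : (L.any fun m => Nat.beq m x) = true :=
      List.any_eq_true.2 ⟨x, hm, Nat.beq_refl x⟩
    rw [if_pos this, h2, cond_true]
  · have : ¬ InL L (toSet x) := by
      rintro ⟨m, hmL, hmx⟩
      exact hm (toSet_inj (hL.lt m hmL) hx hmx ▸ hmL)
    have h2 : (L.any fun m => Nat.beq m x) = false := by
      rw [List.any_eq_false]
      intro m hmL hmx
      exact hm (Nat.eq_of_beq_eq_true hmx ▸ hmL)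
    rw [if_neg this, h2, cond_false]

theorem good_or {L : List ℕ} {ρ : Set (Fin 10) → ℕ} (hL : SPList L)
    (hρ : IsRank L ρ) (X Y : Set (Fin 10)) : Good ρ X Y ∨ InL L (X ∪ Y) := by
  by_cases h : InL L (X ∪ Y)
  · exact Or.inr h
  left
  by_cases h5 : 5 ≤ (X ∪ Y).ncard
  · left
    rw [hρ, if_neg h]
    omega
  · right
    have key : ∀ Z ⊆ X ∪ Y, ρ Z = Z.ncard := by
      intro Z hZ
      have h1 := Set.ncard_le_ncard hZ
      have h2 : ¬ InL L Z := fun h' => by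
        have := hL.ncard_eq h'
        omega
      rw [hρ, if_neg h2]
      omega
    rw [key _ subset_rfl, key _ (by tauto_set), key X (by tauto_set), key Y (by tauto_set)]
    exact Set.ncard_union_add_ncard_inter X Y

theorem mask_eq {a b c : ℕ} {A B : Set (Fin 10)} (ha : a < 1024) (hb : b < 1024) (hc : c < 1024)
    (h : toSet c = A ∪ B) (hA : A ⊆ toSet a) (hB : B ⊆ toSet b) (hac : toSet a ⊆ toSet c)
    (hbc : toSet b ⊆ toSet c) : Nat.beq (Nat.lor a b) c = true := by
  have : Nat.lor a b = c := by
    refine toSet_inj (lor_lt ha hb) hc ?_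
    rw [toSet_lor]
    refine Set.Subset.antisymm (Set.union_subset hac hbc) ?_
    rw [h]
    exact Set.union_subset_union hA hB
  rw [this]
  exact Nat.beq_refl c

theorem ing_of_check {L : List ℕ} {T : ℕ} {ρ : Set (Fin 10) → ℕ} (hL : SPList L)
    (hT : tableOK L T = true) (hρ : IsRank L ρ) (hr : RankLike ρ) (hc : check4 L T = true) :
    Ing ρ := by
  intro A B C D
  rcases good_or hL hρ A C with g | ⟨c13, m13, e13⟩
  · exact ing_of_good13 hr A B C D g
  rcases good_or hL hρ A D with g | ⟨c14, m14, e14⟩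
  · exact ing_of_good14 hr A B C D g
  rcases good_or hL hρ B C with g | ⟨c23, m23, e23⟩
  · exact ing_of_good23 hr A B C D g
  rcases good_or hL hρ B D with g | ⟨c24, m24, e24⟩
  · exact ing_of_good24 hr A B C D g
  rcases good_or hL hρ C D with g | ⟨c34, m34, e34⟩
  · exact ing_of_good34 hr A B C D g
  have r13 : ρ (A ∪ C) = 4 := by rw [hρ, if_pos ⟨c13, m13, e13⟩]
  have r14 : ρ (A ∪ D) = 4 := by rw [hρ, if_pos ⟨c14, m14, e14⟩]
  have r23 : ρ (B ∪ C) = 4 := by rw [hρ, if_pos ⟨c23, m23, e23⟩]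
  have r24 : ρ (B ∪ D) = 4 := by rw [hρ, if_pos ⟨c24, m24, e24⟩]
  have r34 : ρ (C ∪ D) = 4 := by rw [hρ, if_pos ⟨c34, m34, e34⟩]
  have l13 := hL.lt _ m13
  have l14 := hL.lt _ m14
  have l23 := hL.lt _ m23
  have l24 := hL.lt _ m24
  have l34 := hL.lt _ m34
  have h1 := List.all_eq_true.1 (List.all_eq_true.1 (List.all_eq_true.1 (List.all_eq_true.1
    (List.all_eq_true.1 hc c13 m13) c14 m14) c23 m23) c24 m24) c34 m34
  dsimp only at h1
  obtain ⟨y1, hy1⟩ : ∃ y, y = Nat.land c13 c14 := ⟨_, rfl⟩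
  obtain ⟨y2, hy2⟩ : ∃ y, y = Nat.land c23 c24 := ⟨_, rfl⟩
  obtain ⟨y3, hy3⟩ : ∃ y, y = Nat.land (Nat.land c13 c23) c34 := ⟨_, rfl⟩
  obtain ⟨y4, hy4⟩ : ∃ y, y = Nat.land (Nat.land c14 c24) c34 := ⟨_, rfl⟩
  rw [← hy1, ← hy2, ← hy3, ← hy4] at h1
  have s1 : toSet y1 = (A ∪ C) ∩ (A ∪ D) := by rw [hy1, toSet_land, e13, e14]
  have s2 : toSet y2 = (B ∪ C) ∩ (B ∪ D) := by rw [hy2, toSet_land, e23, e24]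
  have s3 : toSet y3 = ((A ∪ C) ∩ (B ∪ C)) ∩ (C ∪ D) := by
    rw [hy3, toSet_land, toSet_land, e13, e23, e34]
  have s4 : toSet y4 = ((A ∪ D) ∩ (B ∪ D)) ∩ (C ∪ D) := by
    rw [hy4, toSet_land, toSet_land, e14, e24, e34]
  have t1 : y1 < 1024 := hy1 ▸ land_lt l14
  have t2 : y2 < 1024 := hy2 ▸ land_lt l24
  have t3 : y3 < 1024 := hy3 ▸ land_lt l34
  have t4 : y4 < 1024 := hy4 ▸ land_lt l34
  have u1 : A ⊆ toSet y1 := by rw [s1]; clear * - ρ; tauto_set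
  have u2 : B ⊆ toSet y2 := by rw [s2]; clear * - ρ; tauto_set
  have u3 : C ⊆ toSet y3 := by rw [s3]; clear * - ρ; tauto_set
  have u4 : D ⊆ toSet y4 := by rw [s4]; clear * - ρ; tauto_set
  rw [mask_eq t1 t3 l13 e13 u1 u3 (by rw [s1, e13]; clear * - ρ; tauto_set) (by rw [s3, e13]; clear * - ρ; tauto_set),
    mask_eq t1 t4 l14 e14 u1 u4 (by rw [s1, e14]; clear * - ρ; tauto_set) (by rw [s4, e14]; clear * - ρ; tauto_set),
    mask_eq t2 t3 l23 e23 u2 u3 (by rw [s2, e23]; clear * - ρ; tauto_set) (by rw [s3, e23]; clear * - ρ; tauto_set),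
    mask_eq t2 t4 l24 e24 u2 u4 (by rw [s2, e24]; clear * - ρ; tauto_set) (by rw [s4, e24]; clear * - ρ; tauto_set),
    mask_eq t3 t4 l34 e34 u3 u4 (by rw [s3, e34]; clear * - ρ; tauto_set) (by rw [s4, e34]; clear * - ρ; tauto_set)] at h1
  simp only [Bool.not_true, Bool.false_or] at h1
  have h2 := Nat.le_of_ble_eq_true h1
  rw [← hρ.look_eq hL hT t3, ← hρ.look_eq hL hT t4, ← hρ.look_eq hL hT (lor_lt t1 t2),
    ← hρ.look_eq hL hT (lor_lt (lor_lt t1 t3) t4),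
    ← hρ.look_eq hL hT (lor_lt (lor_lt t2 t3) t4)] at h2
  simp only [toSet_lor] at h2
  have := hr.mono _ _ u3
  have := hr.mono _ _ u4
  have := hr.mono _ _ (Set.union_subset_union u1 u2)
  have := hr.mono _ _ (Set.union_subset_union (Set.union_subset_union u1 u3) u4)
  have := hr.mono _ _ (Set.union_subset_union (Set.union_subset_union u2 u3) u4)
  omega

theorem kin_of_check {L : List ℕ} {T : ℕ} {ρ : Set (Fin 10) → ℕ} (hL : SPList L)
    (hT : tableOK L T = true) (hρ : IsRank L ρ) (hr : RankLike ρ) (hI : Ing ρ)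
    (hc : check5 L T = true) (A B C D E : Set (Fin 10)) : Kin ρ A B C D E := by
  rcases good_or hL hρ B C with g | ⟨c23, m23, e23⟩
  · exact kin_of_good23 hr hI A B C D E g
  rcases good_or hL hρ B D with g | ⟨c24, m24, e24⟩
  · exact kin_of_good24 hr hI A B C D E g
  rcases good_or hL hρ B E with g | ⟨c25, m25, e25⟩
  · exact (kin_of_good23 hr hI A B E D C g).swap
  rcases good_or hL hρ C D with g | ⟨c34, m34, e34⟩
  · exact kin_of_good34 hr hI A B C D E g
  rcases good_or hL hρ D E with g | ⟨c45, m45, e45⟩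
  · exact (kin_of_good34 hr hI A B E D C g.symm).swap
  have r23 : ρ (B ∪ C) = 4 := by rw [hρ, if_pos ⟨c23, m23, e23⟩]
  have r24 : ρ (B ∪ D) = 4 := by rw [hρ, if_pos ⟨c24, m24, e24⟩]
  have r25 : ρ (B ∪ E) = 4 := by rw [hρ, if_pos ⟨c25, m25, e25⟩]
  have r34 : ρ (C ∪ D) = 4 := by rw [hρ, if_pos ⟨c34, m34, e34⟩]
  have r45 : ρ (D ∪ E) = 4 := by rw [hρ, if_pos ⟨c45, m45, e45⟩]
  have l23 := hL.lt _ m23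
  have l24 := hL.lt _ m24
  have l25 := hL.lt _ m25
  have l34 := hL.lt _ m34
  have l45 := hL.lt _ m45
  have h1 := List.all_eq_true.1 (List.all_eq_true.1 (List.all_eq_true.1 (List.all_eq_true.1
    (List.all_eq_true.1 hc c23 m23) c24 m24) c25 m25) c34 m34) c45 m45
  dsimp only at h1
  obtain ⟨y2, hy2⟩ : ∃ y, y = Nat.land (Nat.land c23 c24) c25 := ⟨_, rfl⟩
  obtain ⟨y3, hy3⟩ : ∃ y, y = Nat.land c23 c34 := ⟨_, rfl⟩
  obtain ⟨y4, hy4⟩ : ∃ y, y = Nat.land (Nat.land c24 c34) c45 := ⟨_, rfl⟩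
  obtain ⟨y5, hy5⟩ : ∃ y, y = Nat.land c25 c45 := ⟨_, rfl⟩
  rw [← hy2, ← hy3, ← hy4, ← hy5] at h1
  have s2 : toSet y2 = ((B ∪ C) ∩ (B ∪ D)) ∩ (B ∪ E) := by
    rw [hy2, toSet_land, toSet_land, e23, e24, e25]
  have s3 : toSet y3 = (B ∪ C) ∩ (C ∪ D) := by rw [hy3, toSet_land, e23, e34]
  have s4 : toSet y4 = ((B ∪ D) ∩ (C ∪ D)) ∩ (D ∪ E) := by
    rw [hy4, toSet_land, toSet_land, e24, e34, e45]
  have s5 : toSet y5 = (B ∪ E) ∩ (D ∪ E) := by rw [hy5, toSet_land, e25, e45]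
  have t2 : y2 < 1024 := hy2 ▸ land_lt l25
  have t3 : y3 < 1024 := hy3 ▸ land_lt l34
  have t4 : y4 < 1024 := hy4 ▸ land_lt l45
  have t5 : y5 < 1024 := hy5 ▸ land_lt l45
  have u2 : B ⊆ toSet y2 := by rw [s2]; clear * - ρ; tauto_set
  have u3 : C ⊆ toSet y3 := by rw [s3]; clear * - ρ; tauto_set
  have u4 : D ⊆ toSet y4 := by rw [s4]; clear * - ρ; tauto_set
  have u5 : E ⊆ toSet y5 := by rw [s5]; clear * - ρ; tauto_set
  rw [mask_eq t2 t3 l23 e23 u2 u3 (by rw [s2, e23]; clear * - ρ; tauto_set) (by rw [s3, e23]; clear * - ρ; tauto_set),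
    mask_eq t2 t4 l24 e24 u2 u4 (by rw [s2, e24]; clear * - ρ; tauto_set) (by rw [s4, e24]; clear * - ρ; tauto_set),
    mask_eq t2 t5 l25 e25 u2 u5 (by rw [s2, e25]; clear * - ρ; tauto_set) (by rw [s5, e25]; clear * - ρ; tauto_set),
    mask_eq t3 t4 l34 e34 u3 u4 (by rw [s3, e34]; clear * - ρ; tauto_set) (by rw [s4, e34]; clear * - ρ; tauto_set),
    mask_eq t4 t5 l45 e45 u4 u5 (by rw [s4, e45]; clear * - ρ; tauto_set) (by rw [s5, e45]; clear * - ρ; tauto_set)] at h1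
  simp only [Bool.not_true, Bool.false_or] at h1
  obtain ⟨z, hz, rfl⟩ := exists_mask A
  have h2 := Nat.le_of_ble_eq_true (List.all_eq_true.1 h1 z (List.mem_range.2 hz))
  rw [← hρ.look_eq hL hT t3, ← hρ.look_eq hL hT t4, ← hρ.look_eq hL hT t5,
    ← hρ.look_eq hL hT (lor_lt hz t2), ← hρ.look_eq hL hT (lor_lt (lor_lt hz t3) t5),
    ← hρ.look_eq hL hT (lor_lt (lor_lt t2 t3) t4),
    ← hρ.look_eq hL hT (lor_lt (lor_lt t2 t4) t5),
    ← hρ.look_eq hL hT (lor_lt hz t3), ← hρ.look_eq hL hT (lor_lt hz t5)] at h2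
  simp only [toSet_lor] at h2
  unfold Kin
  generalize toSet z = A at *
  generalize toSet y2 = Y2 at *
  generalize toSet y3 = Y3 at *
  generalize toSet y4 = Y4 at *
  generalize toSet y5 = Y5 at *
  have := hr.mono _ _ u4
  have := hr.sub (A ∪ C) Y3 (A ∪ Y3) C (by clear * - ρ; tauto_set)
    (Set.subset_inter Set.subset_union_right u3)
  have := hr.sub (A ∪ E) Y5 (A ∪ Y5) E (by clear * - ρ; tauto_set)
    (Set.subset_inter Set.subset_union_right u5)
  have := hr.mono _ _ (Set.union_subset_union (subset_refl A) u2)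
  have := hr.mono _ _ (Set.union_subset_union (Set.union_subset_union (subset_refl A) u3) u5)
  have := hr.mono _ _ (Set.union_subset_union (Set.union_subset_union u2 u3) u4)
  have := hr.mono _ _ (Set.union_subset_union (Set.union_subset_union u2 u4) u5)
  omega

end KinserAux

namespace KinserAux

/-- The sparse paving matroid with circuit-hyperplanes given by `L`. -/
def spMatroid (L : List ℕ) (hL : SPList L) : Matroid (Fin 10) :=
  (IndepMatroid.ofFinite (E := Set.univ) Set.finite_univ
    (fun I => I.ncard ≤ 5 ∧ ¬ InL L I)
    ⟨by simp, fun h => by simpa using hL.ncard_eq h⟩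
    (by
      rintro I J ⟨hJ, hJL⟩ hIJ
      have h1 := Set.ncard_le_ncard hIJ
      refine ⟨h1.trans hJ, fun h => hJL ?_⟩
      have h2 := hL.ncard_eq h
      have h3 : I = J := Set.eq_of_subset_of_ncard_le hIJ (by omega)
      exact h3 ▸ h)
    (by
      rintro I J ⟨hI, hIL⟩ ⟨hJ, hJL⟩ hlt
      obtain ⟨e, heJ, heI⟩ := Set.exists_mem_notMem_of_ncard_lt_ncard hlt
      have he := Set.ncard_insert_of_notMem heI
      by_cases hc : InL L (insert e I)
      · have h5 := hL.ncard_eq hc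
        have hne : insert e I ≠ J := fun h => hJL (h ▸ hc)
        obtain ⟨f, hfJ, hf⟩ : ∃ f ∈ J, f ∉ insert e I := by
          by_contra hcon
          push Not at hcon
          exact hne (Set.eq_of_subset_of_ncard_le hcon (by omega)).symm
        have hfI : f ∉ I := fun h => hf (Set.mem_insert_of_mem _ h)
        refine ⟨f, hfJ, hfI, by rw [Set.ncard_insert_of_notMem hfI]; omega, ?_⟩
        rintro ⟨n, hn, hfn⟩
        obtain ⟨m, hm, hem⟩ := hc
        have hmn : m ≠ n := by
          rintro rfl
          apply hf
          rw [← hem, hfn]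
          exact Set.mem_insert _ _
        have h3 := hL.inter m hm n hn hmn
        rw [← ncard_toSet, toSet_land, hem, hfn] at h3
        have h4 : I ⊆ insert e I ∩ insert f I :=
          Set.subset_inter (Set.subset_insert _ _) (Set.subset_insert _ _)
        have h6 := Set.ncard_le_ncard h4
        omega
      · exact ⟨e, heJ, heI, by omega, hc⟩)
    (fun I _ => Set.subset_univ I)).matroid

theorem spMatroid_E (L : List ℕ) (hL : SPList L) : (spMatroid L hL).E = Set.univ := rfl

theorem spMatroid_indep (L : List ℕ) (hL : SPList L) (I : Set (Fin 10)) :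
    (spMatroid L hL).Indep I ↔ I.ncard ≤ 5 ∧ ¬ InL L I := by
  simp [spMatroid]

theorem rnk_eRk (M : Matroid (Fin 10)) (X : Set (Fin 10)) : (M.rnk X : ℕ∞) = M.eRk X := by
  obtain ⟨I, hI⟩ := M.exists_isBasis' X
  rw [← hI.encard_eq_eRk, ← (Set.toFinite I).cast_ncard_eq]
  congr 1
  apply IsGreatest.csSup_eq
  refine ⟨⟨I, hI.indep, hI.subset, rfl⟩, ?_⟩
  rintro n ⟨J, hJ, hJX, rfl⟩
  have h := hJ.encard_le_eRk_of_subset hJX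
  rw [← hI.encard_eq_eRk, ← (Set.toFinite I).cast_ncard_eq,
    ← (Set.toFinite J).cast_ncard_eq] at h
  exact_mod_cast h

theorem spMatroid_isRank (L : List ℕ) (hL : SPList L) : IsRank L (spMatroid L hL).rnk := by
  intro X
  have key : ∀ k : ℕ, (∃ I, (spMatroid L hL).Indep I ∧ I ⊆ X ∧ I.ncard = k) →
      (∀ I, (spMatroid L hL).Indep I → I ⊆ X → I.ncard ≤ k) → (spMatroid L hL).rnk X = k := by
    intro k h1 h2
    apply IsGreatest.csSup_eq
    refine ⟨h1, ?_⟩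
    rintro n ⟨J, hJ, hJX, rfl⟩
    exact h2 J hJ hJX
  simp only [spMatroid_indep] at key
  split_ifs with h
  · have h5 := hL.ncard_eq h
    obtain ⟨I, hIX, hI⟩ := Set.exists_subset_card_eq (s := X) (n := 4) (by omega)
    refine key 4 ⟨I, ⟨by omega, fun h' => ?_⟩, hIX, hI⟩ ?_
    · have := hL.ncard_eq h'
      omega
    · rintro J ⟨hJ, hJL⟩ hJX
      by_contra hcon
      exact hJL (Set.eq_of_subset_of_ncard_le hJX (by omega) ▸ h)
  · rcases le_or_gt X.ncard 5 with hX | hX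
    · refine key _ ⟨X, ⟨hX, h⟩, subset_rfl, by omega⟩ ?_
      rintro J ⟨hJ, hJL⟩ hJX
      have := Set.ncard_le_ncard hJX
      omega
    · refine key _ ?_ (fun J hJ hJX => ?_)
      · obtain ⟨K, hKX, hK⟩ := Set.exists_subset_card_eq (s := X) (n := 5) (by omega)
        by_cases hKL : InL L K
        · obtain ⟨I, hIK, hI⟩ := Set.exists_subset_card_eq (s := K) (n := 4) (by omega)
          have hKi : (spMatroid L hL).Indep I := by
            rw [spMatroid_indep]
            refine ⟨by omega, fun h' => ?_⟩
            have := hL.ncard_eq h'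
            omega
          obtain ⟨f, hfX, hfK⟩ := Set.exists_mem_notMem_of_ncard_lt_ncard (s := K) (t := X)
            (by omega)
          have hfI : f ∉ I := fun h' => hfK (hIK h')
          have hc := Set.ncard_insert_of_notMem hfI
          refine ⟨insert f I, ⟨by omega, ?_⟩, Set.insert_subset hfX (hIK.trans hKX), by omega⟩
          rintro ⟨n, hn, hfn⟩
          obtain ⟨m, hm, hem⟩ := hKL
          have hmn : m ≠ n := by
            rintro rfl
            apply hfK
            rw [← hem, hfn]
            exact Set.mem_insert _ _
          have h3 := hL.inter m hm n hn hmn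
          rw [← ncard_toSet, toSet_land, hem, hfn] at h3
          have h4 : I ⊆ K ∩ insert f I := Set.subset_inter hIK (Set.subset_insert _ _)
          have h6 := Set.ncard_le_ncard h4
          omega
        · exact ⟨K, ⟨by omega, hKL⟩, hKX, by omega⟩
      · have := hJ.1
        omega

theorem spMatroid_rankLike (L : List ℕ) (hL : SPList L) : RankLike (spMatroid L hL).rnk where
  mono A B h := by
    have := (spMatroid L hL).eRk_mono h
    rw [← rnk_eRk, ← rnk_eRk] at this
    exact_mod_cast this
  submod A B := by
    have := (spMatroid L hL).eRk_inter_add_eRk_union_le A B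
    simp only [← rnk_eRk] at this
    rw [add_comm]
    exact_mod_cast this
  le_five A := by
    have := spMatroid_isRank L hL A
    split_ifs at this <;> omega

theorem spMatroid_isBase (L : List ℕ) (hL : SPList L) (B : Set (Fin 10)) :
    (spMatroid L hL).IsBase B ↔ B.ncard = 5 ∧ ¬ InL L B := by
  have hE : (spMatroid L hL).rnk Set.univ = 5 := by
    have hu : (Set.univ : Set (Fin 10)).ncard = 10 := by simp [Set.ncard_univ]
    rw [spMatroid_isRank L hL, if_neg, hu]
    · rfl
    · intro h
      have := hL.ncard_eq h
      omega
  have hcard : ∀ B, (spMatroid L hL).IsBase B → B.ncard = 5 := by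
    intro B hB
    have h := hB.isBasis_ground.encard_eq_eRk
    rw [spMatroid_E, ← rnk_eRk, hE, ← (Set.toFinite B).cast_ncard_eq] at h
    exact_mod_cast h
  constructor
  · intro hB
    exact ⟨hcard B hB, ((spMatroid_indep L hL B).1 hB.indep).2⟩
  · rintro ⟨h5, hBL⟩
    have hi : (spMatroid L hL).Indep B := (spMatroid_indep L hL B).2 ⟨h5.le, hBL⟩
    obtain ⟨B', hB', hsub⟩ := hi.exists_isBase_superset
    have := hcard B' hB'
    rwa [Set.eq_of_subset_of_ncard_le hsub (by omega)]

theorem compl_mask : ∀ m ∈ LM, 1023 - m ∈ LD ∧ 1023 - (1023 - m) = m ∧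
    Nat.land m (1023 - m) = 0 ∧ Nat.lor m (1023 - m) = 1023 := by decide +kernel

theorem compl_mask' : ∀ m ∈ LD, 1023 - m ∈ LM := by decide +kernel

theorem toSet_zero : toSet 0 = ∅ := by
  ext i
  simp [mem_toSet]

theorem toSet_full : toSet 1023 = Set.univ := by
  ext i
  simp only [mem_toSet, Set.mem_univ, iff_true]
  revert i
  decide

theorem toSet_compl (m : ℕ) (hm : m ∈ LM) : (toSet m)ᶜ = toSet (1023 - m) := by
  obtain ⟨-, -, h1, h2⟩ := compl_mask m hm
  have h3 := congrArg toSet h1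
  have h4 := congrArg toSet h2
  rw [toSet_land, toSet_zero] at h3
  rw [toSet_lor, toSet_full] at h4
  exact IsCompl.compl_eq ⟨Set.disjoint_iff_inter_eq_empty.2 h3, codisjoint_iff.2 h4⟩

theorem inL_compl (B : Set (Fin 10)) : InL LM Bᶜ ↔ InL LD B := by
  constructor
  · rintro ⟨m, hm, h⟩
    refine ⟨1023 - m, (compl_mask m hm).1, ?_⟩
    rw [← toSet_compl m hm, h, compl_compl]
  · rintro ⟨m, hm, rfl⟩
    have hm' := compl_mask' m hm
    have hlt := spList_D.lt m hm
    refine ⟨1023 - m, hm', ?_⟩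
    have h := toSet_compl _ hm'
    rw [show 1023 - (1023 - m) = m by omega] at h
    rw [← h, compl_compl]

theorem dual_eq : (spMatroid LM spList_M)✶ = spMatroid LD spList_D := by
  refine Matroid.ext_isBase rfl fun B _ => ?_
  rw [Matroid.dual_isBase_iff (by simp [spMatroid_E]), spMatroid_isBase, spMatroid_isBase,
    spMatroid_E, ← Set.compl_eq_univ_sdiff, inL_compl]
  have h := Set.ncard_add_ncard_compl B
  rw [Nat.card_eq_fintype_card, Fintype.card_fin] at h
  constructor <;> rintro ⟨h1, h2⟩ <;> exact ⟨by omega, h2⟩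

/-- The violating family of five sets. -/
def bad : ℕ → ℕ
  | 1 => 552
  | 2 => 384
  | 3 => 25
  | 4 => 7
  | 5 => 98
  | _ => 0

end KinserAux

open KinserAux in
/-- There is a finite matroid `M ∈ K 4 − K 5` whose dual lies in `K 5`. -/
theorem Matroid.exists_memKinserClass_four_not_five_dual_five :
    ∃ (α : Type) (M : Matroid α), M.Finite ∧ M.MemKinserClass 4 ∧
      ¬ M.MemKinserClass 5 ∧ M✶.MemKinserClass 5 := by
  have i34 : Finset.Icc 3 4 = {3, 4} := by decide
  have i44 : Finset.Icc 4 4 = {4} := by decide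
  have i35 : Finset.Icc 3 5 = {3, 4, 5} := by decide
  have i45 : Finset.Icc 4 5 = {4, 5} := by decide
  refine ⟨Fin 10, spMatroid LM spList_M, ⟨Set.toFinite _⟩, ?_, ?_, ?_⟩
  · intro X _
    have h := ing_of_check spList_M tableOK_M (spMatroid_isRank LM spList_M)
      (spMatroid_rankLike LM spList_M) check4_M (X 1) (X 2) (X 3) (X 4)
    simp only [KinserIneq, i34, i44, Finset.sum_singleton,
      Finset.sum_pair (show (3 : ℕ) ≠ 4 by decide), Nat.reduceSub]
    omega
  · intro hcon
    have h := hcon (fun i => toSet (bad i)) (fun i _ => Set.subset_univ _)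
    have hl : ∀ x, x < 1024 → (spMatroid LM spList_M).rnk (toSet x) = look TM x := fun x hx =>
      (spMatroid_isRank LM spList_M).look_eq spList_M tableOK_M hx
    simp only [KinserIneq, i35, i45, Finset.sum_pair (show (4 : ℕ) ≠ 5 by decide),
      Finset.sum_insert (show (3 : ℕ) ∉ ({4, 5} : Finset ℕ) by decide), Nat.reduceSub,
      ← toSet_lor] at h
    rw [hl _ (by decide +kernel), hl _ (by decide +kernel), hl _ (by decide +kernel),
      hl _ (by decide +kernel), hl _ (by decide +kernel), hl _ (by decide +kernel),
      hl _ (by decide +kernel), hl _ (by decide +kernel), hl _ (by decide +kernel),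
      hl _ (by decide +kernel), hl _ (by decide +kernel), hl _ (by decide +kernel),
      hl _ (by decide +kernel), hl _ (by decide +kernel)] at h
    revert h
    decide +kernel
  · rw [dual_eq]
    intro X _
    have hI := ing_of_check spList_D tableOK_D (spMatroid_isRank LD spList_D)
      (spMatroid_rankLike LD spList_D) check4_D
    have h := kin_of_check spList_D tableOK_D (spMatroid_isRank LD spList_D)
      (spMatroid_rankLike LD spList_D) hI check5_D (X 1) (X 2) (X 3) (X 4) (X 5)
    simp only [KinserIneq, i35, i45, Finset.sum_pair (show (4 : ℕ) ≠ 5 by decide),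
      Finset.sum_insert (show (3 : ℕ) ∉ ({4, 5} : Finset ℕ) by decide), Nat.reduceSub]
    unfold Kin at h
    omega
end

section
/- Let 𝕂 be an infinite field and let N be a finite matroid representable over 𝕂. Then there exists a finite matroid M that is an excluded minor for 𝕂-representability — i.e. M is not representable over 𝕂 but every proper minor of M is representable over 𝕂 — such that N is a minor of M. -/
open Finset

universe u v

namespace ExMin

open Set Module
open scoped Matroid

section General

variable {ι K V : Type*} [Field K] [AddCommGroup V] [Module K V]

/-- The dimension of the span of an independent set is its size. -/
lemma li_finrank [Finite ι] {Φ : ι → V} {S : Set ι} (hS : LinearIndepOn K Φ S) :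
    finrank K (Submodule.span K (Φ '' S)) = S.ncard := by
  let _ : Fintype S := Fintype.ofFinite S
  have h3 := finrank_span_eq_card (R := K) hS.linearIndependent
  rw [← image_eq_range, ← Nat.card_eq_fintype_card, Nat.card_coe_set_eq] at h3
  exact h3

lemma li_span_top [FiniteDimensional K V] [Finite ι] {Φ : ι → V} {T : Set ι}
    (hT : LinearIndepOn K Φ T) (hTr : T.ncard = finrank K V) :
    Submodule.span K (Φ '' T) = ⊤ :=
  Submodule.eq_top_of_finrank_eq (by rw [li_finrank hT, hTr])

/-- Exchange for linearly independent sets of full size. -/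
lemma li_exchange [FiniteDimensional K V] [Finite ι] (Φ : ι → V) {S T : Set ι}
    (hS : LinearIndepOn K Φ S) (hT : LinearIndepOn K Φ T)
    (hSr : S.ncard = finrank K V) (hTr : T.ncard = finrank K V) {x : ι} (hx : x ∈ S \ T) :
    ∃ y ∈ T \ S, LinearIndepOn K Φ (insert y (S \ {x})) ∧
      (insert y (S \ {x})).ncard = finrank K V := by
  have hTtop := li_span_top hT hTr
  have hx' : Φ x ∉ Submodule.span K (Φ '' (S \ {x})) := by
    have h2 : LinearIndepOn K Φ (insert x (S \ {x})) := by
      rwa [insert_sdiff_singleton, insert_eq_of_mem hx.1]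
    exact h2.notMem_span_of_insert (by simp)
  have hne : ¬ (Φ '' T ⊆ Submodule.span K (Φ '' (S \ {x}))) := by
    intro h
    have : Submodule.span K (Φ '' T) ≤ Submodule.span K (Φ '' (S \ {x})) := Submodule.span_le.2 h
    rw [hTtop] at this
    exact hx' (this trivial)
  obtain ⟨_, ⟨y, hyT, rfl⟩, hy⟩ := not_subset.1 hne
  have hyS : y ∉ S := by
    intro hyS
    apply hy
    apply Submodule.subset_span
    refine ⟨y, ⟨hyS, ?_⟩, rfl⟩
    rintro rfl
    exact hx.2 hyT
  refine ⟨y, ⟨hyT, hyS⟩, (hS.mono sdiff_subset).insert hy, ?_⟩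
  rw [ncard_insert_of_notMem (fun h => hyS h.1), ncard_sdiff_singleton_add_one hx.1, hSr]

/-- Extension of a linearly independent set to one of full size. -/
lemma li_extend [FiniteDimensional K V] [Finite ι] (Φ : ι → V) {I T : Set ι}
    (hI : LinearIndepOn K Φ I) (hT : LinearIndepOn K Φ T) (hTr : T.ncard = finrank K V) :
    ∃ S, I ⊆ S ∧ LinearIndepOn K Φ S ∧ S.ncard = finrank K V := by
  have hTtop := li_span_top hT hTr
  obtain ⟨S, hIS, hS⟩ := Set.Finite.exists_le_maximal
    (s := {S : Set ι | LinearIndepOn K Φ S}) (Set.toFinite _) hI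
  refine ⟨S, hIS, hS.prop, ?_⟩
  have hsp : Submodule.span K (Φ '' S) = ⊤ := by
    rw [eq_top_iff, ← hTtop, Submodule.span_le]
    rintro _ ⟨y, hy, rfl⟩
    by_contra hcon
    have h1 := LinearIndepOn.insert hS.prop hcon
    have h2 := hS.le_of_ge h1 (subset_insert _ _)
    exact hcon (Submodule.subset_span ⟨y, h2 (mem_insert _ _), rfl⟩)
  rw [← li_finrank hS.prop, hsp, finrank_top]

/-- Relaxing a circuit-hyperplane preserves the exchange property. -/
lemma relax_exchange [Finite ι] {P : Set ι → Prop} (hP : Matroid.ExchangeProperty P) {r : ℕ}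
    (hr : ∀ S, P S → S.ncard = r) {H : Set ι} (hH : H.ncard = r)
    (hex : ∀ x ∈ H, ∀ y ∉ H, P (insert y (H \ {x}))) :
    Matroid.ExchangeProperty (fun S => P S ∨ S = H) := by
  rintro S T (hS | rfl) (hT | rfl) x hx
  · obtain ⟨y, hy, h⟩ := hP S T hS hT x hx
    exact ⟨y, hy, Or.inl h⟩
  · by_cases h1 : S \ {x} ⊆ T
    · -- the result is `H`
      have hc : ∃ y ∈ T, y ∉ S := by
        by_contra! hcon
        have := Set.eq_of_subset_of_ncard_le (show T ⊆ S from hcon)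
          (by rw [hr S hS, hH])
        exact hx.2 (this ▸ hx.1)
      obtain ⟨y, hyT, hyS⟩ := hc
      refine ⟨y, ⟨hyT, hyS⟩, Or.inr ?_⟩
      refine Set.eq_of_subset_of_ncard_le (insert_subset hyT h1) ?_
      rw [ncard_insert_of_notMem (fun h => hyS h.1), ncard_sdiff_singleton_add_one hx.1, hr S hS, hH]
    · obtain ⟨z, hz, hzT⟩ := not_subset.1 h1
      have hc : ∃ y ∈ T, y ∉ S := by
        by_contra! hcon
        have := Set.eq_of_subset_of_ncard_le (show T ⊆ S from hcon)
          (by rw [hr S hS, hH])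
        exact hx.2 (this ▸ hx.1)
      obtain ⟨w, hwT, hwS⟩ := hc
      have hB := hex w hwT z hzT
      obtain ⟨y, hy, h⟩ := hP S _ hS hB x ⟨hx.1, by
        rintro (rfl | h)
        · exact hz.2 rfl
        · exact hx.2 h.1⟩
      refine ⟨y, ⟨?_, hy.2⟩, Or.inl h⟩
      rcases hy.1 with rfl | h
      · exact absurd hz.1 hy.2
      · exact h.1
  · have hc : ∃ y ∈ T, y ∉ S := by
      by_contra! hcon
      have := Set.eq_of_subset_of_ncard_le (show T ⊆ S from hcon)
          (by rw [hr T hT, hH])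
      exact hx.2 (this ▸ hx.1)
    obtain ⟨y, hyT, hyS⟩ := hc
    exact ⟨y, ⟨hyT, hyS⟩, Or.inl (hex x hx.1 y hyS)⟩
  · exact absurd hx.1 hx.2

lemma del_eq {M₁ M₂ : Matroid ι} (hE : M₁.E = M₂.E) {e : ι}
    (hne : ∃ S, M₁.IsBase S ∧ e ∉ S) (h : ∀ S, e ∉ S → (M₁.IsBase S ↔ M₂.IsBase S)) :
    M₁ ＼ {e} = M₂ ＼ {e} := by
  by_cases heE : e ∈ M₁.E
  · obtain ⟨S, hS, heS⟩ := hne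
    have c1 : M₁.Coindep {e} := by
      rw [Matroid.coindep_iff_exists (by simpa using heE)]
      exact ⟨S, hS, by simp [subset_sdiff, hS.subset_ground, heS]⟩
    have c2 : M₂.Coindep {e} := by
      rw [Matroid.coindep_iff_exists (by simpa [← hE] using heE)]
      exact ⟨S, (h S heS).1 hS, by simp [subset_sdiff, ← hE, hS.subset_ground, heS]⟩
    refine Matroid.ext_isBase (by simp [hE]) ?_
    intro B _
    rw [c1.delete_isBase_iff, c2.delete_isBase_iff]
    simp only [Set.disjoint_singleton_right]
    constructor
    · rintro ⟨a, b⟩; exact ⟨(h B b).1 a, b⟩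
    · rintro ⟨a, b⟩; exact ⟨(h B b).2 a, b⟩
  · rw [Matroid.deleteElem_eq_self heE, Matroid.deleteElem_eq_self (hE ▸ heE)]
    obtain ⟨S, hS, heS⟩ := hne
    refine Matroid.ext_isBase hE ?_
    intro B hB
    exact h B (fun hh => heE (hB hh))

lemma con_eq {M₁ M₂ : Matroid ι} (hE : M₁.E = M₂.E) {e : ι} (heE : e ∈ M₁.E)
    (hne : ∃ S, M₁.IsBase S ∧ e ∈ S) (h : ∀ S, e ∈ S → (M₁.IsBase S ↔ M₂.IsBase S)) :
    M₁ ／ {e} = M₂ ／ {e} := by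
  rw [← Matroid.dual_delete_dual, ← Matroid.dual_delete_dual M₂]
  congr 1
  have key : ∀ S, e ∉ S → (M₁✶.IsBase S ↔ M₂✶.IsBase S) := by
    intro S heS
    rw [Matroid.dual_isBase_iff', Matroid.dual_isBase_iff', hE, h]
    rw [← hE]; exact ⟨heE, heS⟩
  apply del_eq (by simpa using hE) _ key
  obtain ⟨S, hS, heS⟩ := hne
  exact ⟨M₁.E \ S, hS.compl_isBase_dual, fun hh => hh.2 heS⟩

end General

section Rep

variable {ι : Type} {K : Type} [Field K]

lemma rep_del {M : Matroid ι} (h : M.IsRepOver K) (D : Set ι) : (M ＼ D).IsRepOver K := by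
  obtain ⟨W, i1, i2, φ, hφ⟩ := h
  refine ⟨W, i1, i2, φ, fun I => ?_⟩
  rw [Matroid.delete_indep_iff, hφ, Matroid.delete_ground, subset_sdiff]
  tauto

lemma rep_con {M : Matroid ι} (h : M.IsRepOver K) (C : Set ι) : (M ／ C).IsRepOver K := by
  obtain ⟨W, i1, i2, φ, hφ⟩ := h
  obtain ⟨J, hJ⟩ := M.exists_isBasis' C
  refine ⟨W ⧸ Submodule.span K (φ '' J), inferInstance, inferInstance,
    (Submodule.span K (φ '' J)).mkQ ∘ φ, fun I => ?_⟩
  rw [hJ.contract_indep_iff, Matroid.contract_ground, subset_sdiff, hφ]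
  have hJi := (hφ J).1 hJ.indep
  have hJL : LinearIndepOn K φ J := hJi.2
  constructor
  · rintro ⟨⟨h1, h2⟩, h3⟩
    refine ⟨⟨subset_union_left.trans h1, h3.symm⟩, ?_⟩
    have hd : Disjoint J I := h3.mono_left hJ.subset
    have h2' : LinearIndepOn K φ (J ∪ I) := by rw [union_comm]; exact h2
    exact (hJL.quotient_iff_union hd).2 h2'
  · rintro ⟨⟨h1, h3⟩, h2⟩
    have hd : Disjoint J I := h3.symm.mono_left hJ.subset
    refine ⟨⟨union_subset h1 hJi.1, ?_⟩, h3.symm⟩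
    have h2' := (hJL.quotient_iff_union hd).1 h2
    rw [union_comm] at h2'
    exact h2'

lemma proper_minor_rep {M P : Matroid ι} 
    (hd : ∀ e ∈ M.E, (M ＼ {e}).IsRepOver K) (hc : ∀ e ∈ M.E, (M ／ {e}).IsRepOver K)
    (hP : P.IsProperMinorOf M) : P.IsRepOver K := by
  obtain ⟨C, D, hC, hD, hCD, ⟨e, he⟩, rfl⟩ := hP
  change (M ／ C ＼ D).IsRepOver K
  rcases he with he | he
  · have : M ／ C = M ／ {e} ／ C := by
      rw [Matroid.contract_contract, singleton_union, insert_eq_of_mem he]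
    rw [this]
    exact rep_del (rep_con (hc e (hC he)) C) D
  · rw [Matroid.contract_delete_comm _ hCD]
    have : M ＼ D = M ＼ {e} ＼ D := by
      rw [Matroid.delete_delete, singleton_union, insert_eq_of_mem he]
    rw [this]
    exact rep_con (rep_del (hd e (hD he)) D) C

end Rep

section LinMat

variable {ι : Type} {K V : Type} [Field K] [AddCommGroup V] [Module K V]

/-- Any matroid whose bases are the full-size independent sets is representable. -/
lemma linMat [FiniteDimensional K V] [Finite ι] (Φ : ι → V)
    (hex : ∃ S, LinearIndepOn K Φ S ∧ S.ncard = finrank K V) :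
    ∃ M : Matroid ι, M.E = univ ∧ M.IsRepOver K ∧
      ∀ S, M.IsBase S ↔ (LinearIndepOn K Φ S ∧ S.ncard = finrank K V) := by
  refine ⟨Matroid.ofIsBaseOfFinite (E := univ) (Set.toFinite _)
    (fun S => LinearIndepOn K Φ S ∧ S.ncard = finrank K V) hex ?_ (fun _ _ => subset_univ _),
    rfl, ?_, fun S => Iff.rfl⟩
  · rintro S T ⟨hS, hSr⟩ ⟨hT, hTr⟩ x hx
    exact li_exchange Φ hS hT hSr hTr hx
  · refine ⟨V, inferInstance, inferInstance, Φ, fun I => ?_⟩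
    change (∃ B, (LinearIndepOn K Φ B ∧ B.ncard = finrank K V) ∧ I ⊆ B) ↔
      I ⊆ univ ∧ LinearIndepOn K Φ I
    rw [and_iff_right (subset_univ I)]
    constructor
    · rintro ⟨B, ⟨hB, -⟩, hIB⟩
      exact hB.mono hIB
    · intro hI
      obtain ⟨T, hT, hTr⟩ := hex
      obtain ⟨S, h1, h2, h3⟩ := li_extend Φ (I := I) hI hT hTr
      exact ⟨S, ⟨h2, h3⟩, h1⟩

end LinMat


section Generic

variable {K V : Type*} [Field K] [Infinite K] [AddCommGroup V] [Module K V]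

open scoped Pointwise in
/-- Finitely many translates of proper subspaces do not cover. -/
lemma exists_generic {κ : Type*} [Finite κ] (P : κ → Submodule K V) (t : κ → V)
    (hP : ∀ i, P i ≠ ⊤) : ∃ v, ∀ i, v - t i ∉ P i := by
  have := Fintype.ofFinite κ
  by_contra! hcon
  have hcov : ⋃ i ∈ (Finset.univ : Finset κ), t i +ᵥ ((P i).toAddSubgroup : Set V) = Set.univ := by
    rw [eq_univ_iff_forall]
    intro v
    obtain ⟨i, hi⟩ := hcon v
    simp only [mem_iUnion]
    refine ⟨i, Finset.mem_univ _, v - t i, hi, ?_⟩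
    simp
  obtain ⟨k, -, hfi⟩ := AddSubgroup.exists_finiteIndex_of_leftCoset_cover hcov
  have : Finite (V ⧸ P k) := AddSubgroup.finite_quotient_of_finiteIndex
  have : Nontrivial (V ⧸ P k) := Submodule.Quotient.nontrivial_iff.mpr (hP k)
  have : Infinite (V ⧸ P k) := Module.Free.infinite K (V ⧸ P k)
  exact not_finite (V ⧸ P k)

lemma exists_generic_mem {κ : Type*} [Finite κ] (U : Submodule K V) (P : κ → Submodule K V) :
    ∃ q ∈ U, ∀ i, ¬ U ≤ P i → q ∉ P i := by
  obtain ⟨v, hv⟩ := exists_generic (V := U)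
    (fun i : {i : κ // ¬ U ≤ P i} => (P i.1).comap U.subtype) (fun _ => 0) (by
      rintro ⟨i, hi⟩ h
      apply hi
      simpa using h)
  refine ⟨v, v.2, fun i hi h => ?_⟩
  have := hv ⟨i, hi⟩
  simp at this
  exact this h

end Generic

section Family

variable {J K V : Type*} [Field K] [AddCommGroup V] [Module K V]

lemma li_image {ι ι' : Type*} {g : ι → ι'} (hg : Function.Injective g) (f : ι' → V) (s : Set ι) :
    LinearIndepOn K f (g '' s) ↔ LinearIndepOn K (f ∘ g) s := by
  have := linearIndepOn_range_iff (R := K) (f := fun x : s => g x)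
    (fun a b h => Subtype.ext (hg h)) f
  rw [image_eq_range]
  exact this

/-- The vectors: `ψ` at height zero, and four points at height one. -/
def fam (ψ : J → V) (y : Fin 4 → V) : J ⊕ Fin 4 → V × K :=
  Sum.elim (fun j => (ψ j, 0)) (fun i => (y i, 1))

lemma split_set (S : Set (J ⊕ Fin 4)) :
    S = Sum.inl '' (Sum.inl ⁻¹' S) ∪ Sum.inr '' (Sum.inr ⁻¹' S) := by
  ext (x | x) <;> simp

lemma split_ncard [Finite J] (S : Set (J ⊕ Fin 4)) :
    S.ncard = (Sum.inl ⁻¹' S : Set J).ncard + (Sum.inr ⁻¹' S : Set (Fin 4)).ncard := by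
  conv_lhs => rw [split_set S]
  rw [ncard_union_eq, ncard_image_of_injective _ Sum.inl_injective,
    ncard_image_of_injective _ Sum.inr_injective]
  rw [Set.disjoint_left]
  rintro _ ⟨a, -, rfl⟩ ⟨b, -, h⟩
  cases h

lemma crit (ψ : J → V) (y : Fin 4 → V) (X : Set J) (Y : Set (Fin 4)) :
    LinearIndepOn K (fam (K := K) ψ y) (Sum.inl '' X ∪ Sum.inr '' Y) ↔ LinearIndepOn K ψ X ∧
      ∀ d : Fin 4 → K, (∀ i ∉ Y, d i = 0) → ∑ i, d i = 0 →
        ∑ i, d i • y i ∈ Submodule.span K (ψ '' X) → d = 0 := by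
  classical
  have hdisj : Disjoint (Sum.inl '' X : Set (J ⊕ Fin 4)) (Sum.inr '' Y) := by
    rw [Set.disjoint_left]
    rintro _ ⟨a, -, rfl⟩ ⟨b, -, h⟩
    cases h
  rw [linearIndepOn_union_iff_quotient hdisj]
  have h1 : LinearIndepOn K (fam (K := K) ψ y) (Sum.inl '' X) ↔ LinearIndepOn K ψ X := by
    rw [li_image Sum.inl_injective]
    have : (fam (K := K) ψ y) ∘ Sum.inl = LinearMap.inl K V K ∘ ψ := by
      ext j <;> simp [fam]
    rw [this]
    exact LinearMap.linearIndepOn_iff_of_injOn _ (LinearMap.inl_injective.injOn)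
  rw [h1]
  refine and_congr_right fun _ => ?_
  have hspan : Submodule.span K (fam (K := K) ψ y '' (Sum.inl '' X)) =
      (Submodule.span K (ψ '' X)).map (LinearMap.inl K V K) := by
    rw [Submodule.map_span, image_image, image_image]
    rfl
  rw [hspan, li_image Sum.inr_injective]
  obtain ⟨Y, rfl⟩ := Y.toFinite.exists_finset_coe
  rw [linearIndepOn_finset_iff]
  have key : ∀ d : Fin 4 → K, (∑ i ∈ Y, d i •
      ((((Submodule.span K (ψ '' X)).map (LinearMap.inl K V K)).mkQ ∘ fam (K := K) ψ y) ∘ Sum.inr) i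
        = 0) ↔ (∑ i ∈ Y, d i • y i ∈ Submodule.span K (ψ '' X) ∧ ∑ i ∈ Y, d i = 0) := by
    intro d
    have : (∑ i ∈ Y, d i •
      ((((Submodule.span K (ψ '' X)).map (LinearMap.inl K V K)).mkQ ∘ fam (K := K) ψ y) ∘ Sum.inr) i)
      = ((Submodule.span K (ψ '' X)).map (LinearMap.inl K V K)).mkQ
          (∑ i ∈ Y, d i • y i, ∑ i ∈ Y, d i) := by
      have e : ((∑ i ∈ Y, d i • y i, ∑ i ∈ Y, d i) : V × K) = ∑ i ∈ Y, d i • (y i, (1 : K)) := by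
        rw [Prod.ext_iff]
        simp [Prod.fst_sum, Prod.snd_sum]
      rw [e, map_sum]
      refine Finset.sum_congr rfl fun i _ => ?_
      rw [map_smul]
      rfl
    rw [this, Submodule.mkQ_apply, Submodule.Quotient.mk_eq_zero, Submodule.mem_map]
    constructor
    · rintro ⟨w, hw, h⟩
      simp only [LinearMap.inl_apply, Prod.mk.injEq] at h
      exact ⟨h.1 ▸ hw, h.2.symm⟩
    · rintro ⟨h, h'⟩
      exact ⟨_, h, by rw [LinearMap.inl_apply, h']⟩
  have hs1 : ∀ d : Fin 4 → K, (∀ i ∉ Y, d i = 0) → ∑ i ∈ Y, d i = ∑ i, d i := by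
    intro d hd
    exact Finset.sum_subset (Finset.subset_univ _) (fun i _ hi => hd i hi)
  have hs2 : ∀ d : Fin 4 → K, (∀ i ∉ Y, d i = 0) → ∑ i ∈ Y, d i • y i = ∑ i, d i • y i := by
    intro d hd
    exact Finset.sum_subset (Finset.subset_univ _) (fun i _ hi => by rw [hd i hi, zero_smul])
  constructor
  · intro h d hd h0 hmem
    have hd' : ∀ i ∉ Y, d i = 0 := fun i hi => hd i (by simpa using hi)
    have := h d ((key d).2 ⟨by rwa [hs2 d hd'], by rwa [hs1 d hd']⟩)
    ext i
    by_cases hi : i ∈ Y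
    · exact this i hi
    · exact hd' i hi
  · intro h d hd i hi
    have hk := (key d).1 hd
    let d' : Fin 4 → K := fun i => if i ∈ Y then d i else 0
    have hd' : ∀ i ∉ Y, d' i = 0 := fun i hi => by simp [d', hi]
    have e1 : ∑ i ∈ Y, d' i = ∑ i ∈ Y, d i :=
      Finset.sum_congr rfl (fun i hi => by simp [d', hi])
    have e2 : ∑ i ∈ Y, d' i • y i = ∑ i ∈ Y, d i • y i :=
      Finset.sum_congr rfl (fun i hi => by simp [d', hi])
    have := h d' (fun i hi => hd' i (by simpa using hi))
      (by rw [← hs1 d' hd', e1, hk.2]) (by rw [← hs2 d' hd', e2]; exact hk.1)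
    have := congrFun this i
    simpa [d', hi] using this

lemma fam_li [Finite J] [FiniteDimensional K V] {m : ℕ} (hm : finrank K V = m + 1)
    (ψ : J → V) (y : Fin 4 → V)
    (h4 : ∃ d : Fin 4 → K, d ≠ 0 ∧ ∑ i, d i = 0 ∧ ∑ i, d i • y i = 0)
    (h3 : ∀ X : Set J, LinearIndepOn K ψ X → X.ncard + 1 = m → ∀ d : Fin 4 → K, (∃ k, d k = 0) →
      ∑ i, d i = 0 → ∑ i, d i • y i ∈ Submodule.span K (ψ '' X) → d = 0)
    (X : Set J) (Y : Set (Fin 4)) (hS : X.ncard + Y.ncard = m + 2) :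
    LinearIndepOn K (fam (K := K) ψ y) (Sum.inl '' X ∪ Sum.inr '' Y) ↔
      LinearIndepOn K ψ X ∧ Y ≠ ∅ ∧ Y ≠ univ ∧
      ∀ i j, i < j → Y = {i, j} → y j - y i ∉ Submodule.span K (ψ '' X) := by
  rw [crit]
  refine and_congr_right fun hX => ?_
  constructor
  · intro h
    refine ⟨?_, ?_, ?_⟩
    · rintro rfl
      have h1 := li_finrank hX
      have h2 := Submodule.finrank_le (Submodule.span K (ψ '' X))
      simp at hS
      omega
    · rintro rfl
      obtain ⟨d, hd, h0, h1⟩ := h4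
      exact hd (h d (by simp) h0 (by rw [h1]; exact zero_mem _))
    · rintro i j hij rfl hmem
      have := h (fun k => if k = j then 1 else if k = i then -1 else 0) (by
        intro k hk
        simp only [mem_insert_iff, mem_singleton_iff, not_or] at hk
        simp [hk.1, hk.2]) (by
          rw [Fintype.sum_eq_add i j hij.ne (fun k hk => by simp [hk.1, hk.2])]
          simp [hij.ne]) (by
          rw [Fintype.sum_eq_add i j hij.ne (fun k hk => by simp [hk.1, hk.2])]
          simp only [hij.ne, if_true, if_false, neg_smul, one_smul]
          rwa [neg_add_eq_sub])
      have := congrFun this j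
      simp at this
  · rintro ⟨hne, hnu, hpair⟩ d hd h0 hmem
    have hle : Y.ncard ≤ 4 := by
      have := Set.ncard_le_ncard (subset_univ Y)
      simpa using this
    have hpos : Y.ncard ≠ 0 := by
      rw [Ne, Set.ncard_eq_zero]; exact hne
    have hlt : Y.ncard ≠ 4 := by
      intro h
      apply hnu
      refine Set.eq_of_subset_of_ncard_le (subset_univ _) ?_
      simp [h]
    obtain h1 | h2 | h33 : Y.ncard = 1 ∨ Y.ncard = 2 ∨ Y.ncard = 3 := by omega
    · obtain ⟨i, rfl⟩ := Set.ncard_eq_one.1 h1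
      have h5 : ∑ k, d k = d i := Finset.sum_eq_single i (fun k _ hk => hd k hk) (by simp)
      ext k
      by_cases hk : k = i
      · subst hk; rw [← h5, h0]; rfl
      · exact hd k hk
    · have : ∃ i j, i < j ∧ Y = {i, j} := by
        obtain ⟨i, j, hij, rfl⟩ := Set.ncard_eq_two.1 h2
        rcases lt_or_gt_of_ne hij with h | h
        · exact ⟨i, j, h, rfl⟩
        · exact ⟨j, i, h, Set.pair_comm _ _⟩
      obtain ⟨i, j, hij, rfl⟩ := this
      have h5 : ∑ k, d k = d i + d j :=
        Fintype.sum_eq_add i j hij.ne (fun k hk => hd k (by simp [hk.1, hk.2]))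
      have h6 : ∑ k, d k • y k = d i • y i + d j • y j :=
        Fintype.sum_eq_add i j hij.ne (fun k hk => by
          rw [hd k (by simp [hk.1, hk.2]), zero_smul])
      have h7 : d i = - d j := by rw [h5] at h0; exact eq_neg_of_add_eq_zero_left h0
      have h8 : d j = 0 := by
        by_contra hne
        apply hpair i j hij rfl
        rw [h6, h7] at hmem
        have := Submodule.smul_mem _ (d j)⁻¹ hmem
        convert this using 1
        rw [smul_add, smul_smul, smul_smul, mul_neg, inv_mul_cancel₀ hne]
        simp [sub_eq_neg_add]
      ext k
      by_cases hk : k ∈ ({i, j} : Set (Fin 4))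
      · rcases hk with rfl | rfl
        · rw [h7, h8]; simp
        · exact h8
      · exact hd k hk
    · obtain ⟨k, hk⟩ : ∃ k, k ∉ Y := by
        by_contra! hcon
        exact hnu (eq_univ_of_forall hcon)
      exact h3 X hX (by omega) d ⟨k, hd k hk⟩ h0 hmem

/-- The combinatorial description of bases. -/
def Bs (K : Type*) {J V : Type*} [Field K] [AddCommGroup V] [Module K V]
    (ψ : J → V) (P1 P2 : Set J → Prop) (X : Set J) (Y : Set (Fin 4)) : Prop :=
  LinearIndepOn K ψ X ∧ Y ≠ ∅ ∧ Y ≠ univ ∧ (Y = {0, 1} → ¬ P1 X) ∧ (Y = {2, 3} → ¬ P2 X)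

lemma exists_fam [Finite J] [FiniteDimensional K V] [Infinite K] {m : ℕ}
    (hm : finrank K V = m + 1) (ψ : J → V) {ν μ : K} (hμ : μ ≠ 0) (hν : ν ≠ 1) (hμν : μ ≠ ν)
    (U : Submodule K V)
    (hU : ∀ X : Set J, LinearIndepOn K ψ X → X.ncard < m → ¬ U ≤ Submodule.span K (ψ '' X)) :
    ∃ Φ : J ⊕ Fin 4 → V × K, ∀ (X : Set J) (Y : Set (Fin 4)), X.ncard + Y.ncard = m + 2 →
      (LinearIndepOn K Φ (Sum.inl '' X ∪ Sum.inr '' Y) ↔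
        Bs K ψ (fun X => ν = 0 ∧ U ≤ Submodule.span K (ψ '' X))
          (fun X => μ = 1 ∧ U ≤ Submodule.span K (ψ '' X)) X Y) := by
  classical
  obtain ⟨q, hqU, hq⟩ := exists_generic_mem U (fun X : Set J => Submodule.span K (ψ '' X))
  let T : Finset K := {0, -μ⁻¹, (1 - ν)⁻¹, -ν⁻¹, -(μ - 1)⁻¹}
  obtain ⟨v, hv⟩ := exists_generic (κ := ({X : Set J // Submodule.span K (ψ '' X) ≠ ⊤} × T) ⊕
      {X : Set J // Submodule.span K (ψ '' X) ⊔ Submodule.span K {q} ≠ ⊤})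
    (Sum.elim (fun p => Submodule.span K (ψ '' p.1.1))
      (fun p => Submodule.span K (ψ '' p.1) ⊔ Submodule.span K {q}))
    (Sum.elim (fun p => p.2.1 • q) (fun _ => 0)) (by
      rintro (⟨⟨X, hX⟩, c⟩ | ⟨X, hX⟩)
      · exact hX
      · exact hX)
  have hv1 : ∀ X : Set J, LinearIndepOn K ψ X → X.ncard ≤ m → ∀ c ∈ T,
      v - c • q ∉ Submodule.span K (ψ '' X) := by
    intro X hX hc c hcT
    refine hv (Sum.inl (⟨X, ?_⟩, ⟨c, hcT⟩))
    intro h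
    have := li_finrank hX
    rw [h, finrank_top] at this
    omega
  have hv2 : ∀ X : Set J, LinearIndepOn K ψ X → X.ncard < m →
      v ∉ Submodule.span K (ψ '' X) ⊔ Submodule.span K {q} := by
    intro X hX hc
    have := hv (Sum.inr ⟨X, ?_⟩)
    · simpa using this
    · intro h
      have h1 := li_finrank hX
      have h2 := Submodule.finrank_add_le_finrank_add_finrank
        (Submodule.span K (ψ '' X)) (Submodule.span K {q})
      have h3 := finrank_span_le_card (R := K) ({q} : Set V)
      rw [h, finrank_top] at h2
      simp at h3
      omega
  have hv3 : ∀ X : Set J, LinearIndepOn K ψ X → X.ncard ≤ m → ∀ f g : K, g ≠ 0 → -(f / g) ∈ T →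
      f • q + g • v ∉ Submodule.span K (ψ '' X) := by
    intro X hX hc f g hg hT hmem
    apply hv1 X hX hc _ hT
    have := Submodule.smul_mem _ g⁻¹ hmem
    convert this using 1
    rw [smul_add, smul_smul, smul_smul, inv_mul_cancel₀ hg, one_smul, neg_smul, sub_neg_eq_add,
      add_comm, div_eq_inv_mul]
  have hsum : ∀ d : Fin 4 → K, ∑ i, d i • (![0, q + ν • v, v, q + μ • v] : Fin 4 → V) i =
      (d 1 + d 3) • q + (ν * d 1 + d 2 + μ * d 3) • v := by
    intro d
    simp only [Fin.sum_univ_four]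
    simp
    module
  refine ⟨fam ψ ![0, q + ν • v, v, q + μ • v], fun X Y hXY => ?_⟩
  rw [fam_li hm ψ _ ?_ ?_ X Y hXY]
  · unfold Bs
    refine and_congr_right fun hX => and_congr_right fun hY0 => and_congr_right fun hY1 => ?_
    have hc : ∀ i j : Fin 4, i < j → Y = {i, j} → X.ncard = m := by
      rintro i j hij rfl
      rw [Set.ncard_pair hij.ne] at hXY
      omega
    constructor
    · intro h
      constructor
      · rintro hY ⟨rfl, hUX⟩
        have := h 0 1 (by decide) hY
        simp at this
        exact this (hUX hqU)
      · rintro hY ⟨rfl, hUX⟩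
        have := h 2 3 (by decide) hY
        simp at this
        exact this (hUX hqU)
    · rintro ⟨ha, hb⟩ i j hij hY
      have hXm := (hc i j hij hY).le
      have hcase : (i = 0 ∧ j = 1) ∨ (i = 0 ∧ j = 2) ∨ (i = 0 ∧ j = 3) ∨ (i = 1 ∧ j = 2) ∨
          (i = 1 ∧ j = 3) ∨ (i = 2 ∧ j = 3) := by
        have hall : ∀ i j : Fin 4, i < j → (i = 0 ∧ j = 1) ∨ (i = 0 ∧ j = 2) ∨ (i = 0 ∧ j = 3) ∨
          (i = 1 ∧ j = 2) ∨ (i = 1 ∧ j = 3) ∨ (i = 2 ∧ j = 3) := by decide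
        exact hall i j hij
      rcases hcase with ⟨rfl, rfl⟩ | ⟨rfl, rfl⟩ | ⟨rfl, rfl⟩ | ⟨rfl, rfl⟩ | ⟨rfl, rfl⟩ | ⟨rfl, rfl⟩
      · by_cases h0 : ν = 0
        · have := hq X (fun h => ha hY ⟨h0, h⟩)
          simpa [h0] using this
        · have := hv3 X hX hXm 1 ν h0 (by simp [T])
          simpa using this
      · have := hv3 X hX hXm 0 1 one_ne_zero (by simp [T])
        simpa using this
      · have := hv3 X hX hXm 1 μ hμ (by simp [T])
        simpa using this
      · have := hv3 X hX hXm (-1) (1 - ν) (sub_ne_zero.2 hν.symm) (by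
          simp [T, neg_div])
        convert this using 2
        simp
        module
      · have := hv3 X hX hXm 0 (μ - ν) (sub_ne_zero.2 hμν) (by simp [T])
        convert this using 2
        simp
        module
      · by_cases h0 : μ = 1
        · have := hq X (fun h => hb hY ⟨h0, h⟩)
          simpa [h0] using this
        · have := hv3 X hX hXm 1 (μ - 1) (sub_ne_zero.2 h0) (by simp [T])
          convert this using 2
          simp
          module
  · refine ⟨![μ - ν, -1, ν - μ, 1], ?_, ?_, ?_⟩
    · intro h
      have := congrFun h 3
      simp at this
    · simp [Fin.sum_univ_four]
      ring
    · rw [hsum]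
      simp
      left
      ring
  · rintro X hX hXm d ⟨k, hk⟩ h0 hmem
    rw [hsum] at hmem
    have hg : ν * d 1 + d 2 + μ * d 3 = 0 := by
      by_contra hg
      apply hv2 X hX (by omega)
      have h1 : ((d 1 + d 3) • q + (ν * d 1 + d 2 + μ * d 3) • v) - (d 1 + d 3) • q ∈
          Submodule.span K (ψ '' X) ⊔ Submodule.span K {q} :=
        sub_mem (Submodule.mem_sup_left hmem) (Submodule.mem_sup_right
          (Submodule.smul_mem _ _ (Submodule.mem_span_singleton_self q)))
      rw [add_sub_cancel_left] at h1
      exact (Submodule.smul_mem_iff _ hg).1 h1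
    have hf : d 1 + d 3 = 0 := by
      by_contra hf
      rw [hg, zero_smul, add_zero] at hmem
      exact hq X (hU X hX (by omega)) ((Submodule.smul_mem_iff _ hf).1 hmem)
    rw [Fin.sum_univ_four] at h0
    have hne : μ - ν ≠ 0 := sub_ne_zero.2 hμν
    have e1 : d 1 = - d 3 := by linear_combination hf
    have e2 : d 2 = -(μ - ν) * d 3 := by linear_combination hg - ν * hf
    have e0 : d 0 = (μ - ν) * d 3 := by linear_combination h0 - hf - e2
    have e3 : d 3 = 0 := by
      fin_cases k
      · simp at hk
        rw [e0] at hk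
        exact (mul_eq_zero.1 hk).resolve_left hne
      · simp at hk
        rw [e1] at hk
        simpa using hk
      · simp at hk
        rw [e2] at hk
        exact (mul_eq_zero.1 hk).resolve_left (neg_ne_zero.2 hne)
      · exact hk
    ext i
    fin_cases i <;> simp [e0, e1, e2, e3]

end Family


set_option linter.unusedSectionVars false

section Core

/-- Two independent circuit-hyperplane-like sets covering the ground set. -/
structure Dat {J K V : Type} [Field K] [AddCommGroup V] [Module K V] (ψ : J → V)
    (a b : V →ₗ[K] K) (A B : Set J) (m : ℕ) : Prop where
  dim : finrank K V = m + 1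
  two : 2 ≤ m
  cover : A ∪ B = univ
  liA : LinearIndepOn K ψ A
  liB : LinearIndepOn K ψ B
  cA : A.ncard = m
  cB : B.ncard = m
  aA : ∀ j ∈ A, a (ψ j) = 0
  bA : ∀ j ∈ A, b (ψ j) ≠ 0
  bB : ∀ j ∈ B, b (ψ j) = 0
  aB : ∀ j ∈ B, a (ψ j) ≠ 0

variable {J K V : Type} [Finite J] [Field K] [AddCommGroup V] [Module K V] [FiniteDimensional K V]
  {ψ : J → V} {a b : V →ₗ[K] K} {A B : Set J} {m : ℕ}

namespace Dat

lemma symm (D : Dat ψ a b A B m) : Dat ψ b a B A m :=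
  ⟨D.dim, D.two, by rw [Set.union_comm]; exact D.cover, D.liB, D.liA, D.cB, D.cA, D.bB, D.aB,
    D.aA, D.bA⟩

lemma notB (D : Dat ψ a b A B m) {j : J} (hj : j ∈ A) : j ∉ B := fun h => D.bA j hj (D.bB j h)

lemma memA (D : Dat ψ a b A B m) {j : J} (hj : j ∉ B) : j ∈ A := by
  have : j ∈ A ∪ B := by rw [D.cover]; trivial
  exact this.resolve_right hj

lemma neA (D : Dat ψ a b A B m) : A.Nonempty := by
  rw [← Set.ncard_pos, D.cA]
  have := D.two
  omega

lemma finrank_ker (D : Dat ψ a b A B m) : finrank K (LinearMap.ker a) = m := by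
  have h1 := a.finrank_range_add_finrank_ker
  have h2 : LinearMap.range a = ⊤ := by
    rw [LinearMap.range_eq_top]
    apply LinearMap.surjective
    rintro rfl
    obtain ⟨j, hj⟩ := D.symm.neA
    exact D.aB j hj rfl
  rw [h2, finrank_top, finrank_self, D.dim] at h1
  omega

lemma spanA (D : Dat ψ a b A B m) : Submodule.span K (ψ '' A) = LinearMap.ker a := by
  apply Submodule.eq_of_le_of_finrank_eq
  · rw [Submodule.span_le]
    rintro _ ⟨j, hj, rfl⟩
    exact D.aA j hj
  · rw [li_finrank D.liA, D.cA, D.finrank_ker]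

lemma half (D : Dat ψ a b A B m) {X : Set J} (hX : LinearIndepOn K ψ X) (hc : X.ncard ≤ m)
    (hU : LinearMap.ker a ⊓ LinearMap.ker b ≤ Submodule.span K (ψ '' X)) {x : J} (hx : x ∈ X)
    (hxA : x ∈ A) : X = A := by
  have hk : LinearMap.ker a ≤ Submodule.span K (ψ '' X) := by
    intro v hv
    have h1 : v - (b v / b (ψ x)) • ψ x ∈ Submodule.span K (ψ '' X) := by
      apply hU
      rw [LinearMap.mem_ker] at hv
      refine ⟨?_, ?_⟩
      · rw [SetLike.mem_coe, LinearMap.mem_ker, map_sub, map_smul, D.aA x hxA, hv]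
        simp
      · rw [SetLike.mem_coe, LinearMap.mem_ker, map_sub, map_smul, smul_eq_mul,
          div_mul_cancel₀ _ (D.bA x hxA), sub_self]
    have h2 : (b v / b (ψ x)) • ψ x ∈ Submodule.span K (ψ '' X) :=
      Submodule.smul_mem _ _ (Submodule.subset_span ⟨x, hx, rfl⟩)
    simpa using add_mem h1 h2
  have hfr := li_finrank hX
  have heq : LinearMap.ker a = Submodule.span K (ψ '' X) :=
    Submodule.eq_of_le_of_finrank_le hk (by rw [hfr, D.finrank_ker]; exact hc)
  rw [← heq, D.finrank_ker] at hfr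
  refine Set.eq_of_subset_of_ncard_le (fun j hj => ?_) (by rw [D.cA, hfr])
  apply D.memA
  intro hjB
  apply D.aB j hjB
  rw [← LinearMap.mem_ker, heq]
  exact Submodule.subset_span ⟨j, hj, rfl⟩

lemma hyp (D : Dat ψ a b A B m) {X : Set J} (hX : LinearIndepOn K ψ X) (hc : X.ncard ≤ m)
    (hU : LinearMap.ker a ⊓ LinearMap.ker b ≤ Submodule.span K (ψ '' X)) : X = A ∨ X = B := by
  rcases X.eq_empty_or_nonempty with rfl | ⟨x, hx⟩
  · exfalso
    rw [image_empty, Submodule.span_empty, le_bot_iff] at hU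
    have h1 := Submodule.finrank_sup_add_finrank_inf_eq (LinearMap.ker a) (LinearMap.ker b)
    rw [D.finrank_ker, D.symm.finrank_ker, hU, finrank_bot] at h1
    have h2 := Submodule.finrank_le (LinearMap.ker a ⊔ LinearMap.ker b)
    rw [D.dim] at h2
    have := D.two
    omega
  · by_cases hxB : x ∈ B
    · exact Or.inr (D.symm.half hX hc (by rwa [inf_comm]) hx hxB)
    · exact Or.inl (D.half hX hc hU hx (D.memA hxB))

lemma AneB (D : Dat ψ a b A B m) : A ≠ B := by
  rintro rfl
  obtain ⟨x, hx⟩ := D.neA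
  exact D.notB hx hx

lemma leA (D : Dat ψ a b A B m) {X : Set J} (hX : LinearIndepOn K ψ X) (hc : X.ncard ≤ m) :
    LinearMap.ker a ≤ Submodule.span K (ψ '' X) ↔ X = A := by
  constructor
  · intro h
    rcases D.hyp hX hc (inf_le_left.trans h) with h1 | rfl
    · exact h1
    · exfalso
      obtain ⟨x, hx⟩ := D.neA
      have := h (D.aA x hx)
      rw [D.symm.spanA] at this
      exact D.bA x hx this
  · rintro rfl
    exact D.spanA.ge

lemma leU (D : Dat ψ a b A B m) {X : Set J} (hX : LinearIndepOn K ψ X) (hc : X.ncard ≤ m) :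
    LinearMap.ker a ⊓ LinearMap.ker b ≤ Submodule.span K (ψ '' X) ↔ X = A ∨ X = B := by
  constructor
  · exact D.hyp hX hc
  · rintro (rfl | rfl)
    · exact inf_le_left.trans D.spanA.ge
    · exact inf_le_right.trans D.symm.spanA.ge

lemma notSmall (D : Dat ψ a b A B m) {X : Set J} (hX : LinearIndepOn K ψ X) (hc : X.ncard < m) :
    ¬ LinearMap.ker a ⊓ LinearMap.ker b ≤ Submodule.span K (ψ '' X) := by
  intro h
  rcases D.hyp hX hc.le h with rfl | rfl
  · rw [D.cA] at hc; omega
  · rw [D.cB] at hc; omega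

end Dat

/-- The combinatorial bases. -/
def GB (K : Type) {J V : Type} [Field K] [AddCommGroup V] [Module K V]
    (ψ : J → V) (m : ℕ) (P1 P2 : Set J → Prop) (S : Set (J ⊕ Fin 4)) : Prop :=
  S.ncard = m + 2 ∧ Bs K ψ P1 P2 (Sum.inl ⁻¹' S) (Sum.inr ⁻¹' S)

lemma Bs_congr {P1 P2 P1' P2' : Set J → Prop} {X : Set J} {Y : Set (Fin 4)}
    (h1 : LinearIndepOn K ψ X → Y = {0, 1} → (P1 X ↔ P1' X))
    (h2 : LinearIndepOn K ψ X → Y = {2, 3} → (P2 X ↔ P2' X)) :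
    Bs K ψ P1 P2 X Y ↔ Bs K ψ P1' P2' X Y := by
  unfold Bs
  refine and_congr_right fun hX => and_congr_right fun _ => and_congr_right fun _ => ?_
  refine and_congr (forall_congr' fun hY => ?_) (forall_congr' fun hY => ?_)
  · rw [h1 hX hY]
  · rw [h2 hX hY]

lemma pair_ncard {X : Set J} {Y : Set (Fin 4)} (h : X.ncard + Y.ncard = m + 2) {i j : Fin 4}
    (hij : i ≠ j) (hY : Y = {i, j}) : X.ncard = m := by
  rw [hY, Set.ncard_pair hij] at h
  omega

lemma Dat.fam_aux [Infinite K] (D : Dat ψ a b A B m) {ν μ : K} (hμ : μ ≠ 0) (hν : ν ≠ 1)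
    (hμν : μ ≠ ν) (U : Submodule K V) (hU : LinearMap.ker a ⊓ LinearMap.ker b ≤ U)
    (P1 P2 : Set J → Prop)
    (h1 : ∀ X, LinearIndepOn K ψ X → X.ncard = m →
      ((ν = 0 ∧ U ≤ Submodule.span K (ψ '' X)) ↔ P1 X))
    (h2 : ∀ X, LinearIndepOn K ψ X → X.ncard = m →
      ((μ = 1 ∧ U ≤ Submodule.span K (ψ '' X)) ↔ P2 X)) :
    ∃ Φ : J ⊕ Fin 4 → V × K, ∀ S, (LinearIndepOn K Φ S ∧ S.ncard = finrank K (V × K)) ↔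
      GB K ψ m P1 P2 S := by
  obtain ⟨Φ, hΦ⟩ := exists_fam D.dim ψ hμ hν hμν U
    (fun X hX hc h => D.notSmall hX hc (hU.trans h))
  refine ⟨Φ, fun S => ?_⟩
  have hfr : finrank K (V × K) = m + 2 := by
    rw [finrank_prod, D.dim, finrank_self]
  rw [hfr, and_comm]
  refine and_congr_right fun hS => ?_
  have hS' := hS
  rw [split_ncard] at hS'
  conv_lhs => rw [split_set S]
  rw [hΦ _ _ hS']
  exact Bs_congr (fun hX hY => h1 _ hX (pair_ncard hS' (by decide) hY))
    (fun hX hY => h2 _ hX (pair_ncard hS' (by decide) hY))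

lemma Dat.fam0 [Infinite K] (D : Dat ψ a b A B m) :
    ∃ Φ : J ⊕ Fin 4 → V × K, ∀ S, (LinearIndepOn K Φ S ∧ S.ncard = finrank K (V × K)) ↔
      GB K ψ m (fun X => X = A ∨ X = B) (fun X => X = A ∨ X = B) S :=
  D.fam_aux (ν := 0) (μ := 1) one_ne_zero zero_ne_one one_ne_zero _ le_rfl _ _
    (fun X hX hc => by rw [D.leU hX hc.le]; simp) (fun X hX hc => by rw [D.leU hX hc.le]; simp)

lemma exists_ne_ne (K : Type) [Field K] [Infinite K] : ∃ t : K, t ≠ 0 ∧ t ≠ 1 := by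
  classical
  obtain ⟨t, ht⟩ := Infinite.exists_notMem_finset ({0, 1} : Finset K)
  simp at ht
  exact ⟨t, ht⟩

lemma Dat.fam1 [Infinite K] (D : Dat ψ a b A B m) :
    ∃ Φ : J ⊕ Fin 4 → V × K, ∀ S, (LinearIndepOn K Φ S ∧ S.ncard = finrank K (V × K)) ↔
      GB K ψ m (fun X => X = B) (fun _ => False) S := by
  obtain ⟨t, h0, h1⟩ := exists_ne_ne K
  exact D.fam_aux (ν := 0) (μ := t) h0 zero_ne_one h0 _ inf_le_right _ _
    (fun X hX hc => by rw [D.symm.leA hX hc.le]; simp) (fun X hX hc => by simp [h1])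

lemma Dat.fam2 [Infinite K] (D : Dat ψ a b A B m) :
    ∃ Φ : J ⊕ Fin 4 → V × K, ∀ S, (LinearIndepOn K Φ S ∧ S.ncard = finrank K (V × K)) ↔
      GB K ψ m (fun _ => False) (fun X => X = A) S := by
  obtain ⟨t, h0, h1⟩ := exists_ne_ne K
  exact D.fam_aux (ν := t) (μ := 1) one_ne_zero h1 h1.symm _ inf_le_left _ _
    (fun X hX hc => by simp [h0]) (fun X hX hc => by rw [D.leA hX hc.le]; simp)

lemma pre_inl (X : Set J) (Y : Set (Fin 4)) :
    Sum.inl ⁻¹' (Sum.inl '' X ∪ Sum.inr '' Y : Set (J ⊕ Fin 4)) = X := by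
  ext; simp

lemma pre_inr (X : Set J) (Y : Set (Fin 4)) :
    Sum.inr ⁻¹' (Sum.inl '' X ∪ Sum.inr '' Y : Set (J ⊕ Fin 4)) = Y := by
  ext; simp

lemma GB_mk {P1 P2 : Set J → Prop} {X : Set J} {Y : Set (Fin 4)} :
    GB K ψ m P1 P2 (Sum.inl '' X ∪ Sum.inr '' Y) ↔
      X.ncard + Y.ncard = m + 2 ∧ Bs K ψ P1 P2 X Y := by
  unfold GB
  rw [split_ncard, pre_inl, pre_inr]

lemma fin4 {Y Z : Set (Fin 4)} : Y = Z ↔ ((0 ∈ Y ↔ 0 ∈ Z) ∧ (1 ∈ Y ↔ 1 ∈ Z) ∧ (2 ∈ Y ↔ 2 ∈ Z) ∧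
    (3 ∈ Y ↔ 3 ∈ Z)) := by
  rw [Set.ext_iff]
  constructor
  · intro h; exact ⟨h _, h _, h _, h _⟩
  · rintro ⟨h0, h1, h2, h3⟩ i
    fin_cases i <;> assumption

/-- The common bases. -/
lemma Dat.baseA (D : Dat ψ a b A B m) (P1 P2 : Set J → Prop) :
    GB K ψ m P1 P2 (Sum.inl '' A ∪ Sum.inr '' {0, 2}) := by
  rw [GB_mk, D.cA, Set.ncard_pair (by decide)]
  refine ⟨rfl, D.liA, ?_, ?_, fun h => ?_, fun h => ?_⟩
  all_goals simp [fin4] at *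

lemma Dat.baseB (D : Dat ψ a b A B m) (P1 P2 : Set J → Prop) :
    GB K ψ m P1 P2 (Sum.inl '' B ∪ Sum.inr '' {1, 3}) := by
  rw [GB_mk, D.cB, Set.ncard_pair (by decide)]
  refine ⟨rfl, D.liB, ?_, ?_, fun h => ?_, fun h => ?_⟩
  all_goals simp [fin4] at *

lemma Dat.insB (D : Dat ψ a b A B m) {X : Set J} (hX : X ⊆ B) {k : J} (hk : k ∉ B) :
    LinearIndepOn K ψ (insert k X) := by
  rw [linearIndepOn_insert (fun h => hk (hX h))]
  refine ⟨D.liB.mono hX, fun h => ?_⟩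
  have h2 := Submodule.span_mono (image_mono hX) h
  rw [D.symm.spanA] at h2
  exact D.bA k (D.memA hk) h2

/-- The matroid description: relax one circuit-hyperplane. -/
lemma Dat.relax (D : Dat ψ a b A B m) (S : Set (J ⊕ Fin 4)) :
    (GB K ψ m (fun X => X = A ∨ X = B) (fun X => X = A ∨ X = B) S ∨
      S = Sum.inl '' B ∪ Sum.inr '' {2, 3}) ↔ GB K ψ m (fun X => X = A ∨ X = B) (fun X => X = A) S := by
  constructor
  · rintro (h | rfl)
    · obtain ⟨h0, h1, h2, h3, h4, h5⟩ := h
      exact ⟨h0, h1, h2, h3, h4, fun hY hX => h5 hY (Or.inl hX)⟩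
    · rw [GB_mk, D.cB, Set.ncard_pair (by decide)]
      refine ⟨rfl, D.liB, ?_, ?_, fun h => ?_, fun h => D.AneB.symm⟩
      all_goals simp [fin4] at *
  · rintro ⟨h0, h1, h2, h3, h4, h5⟩
    by_cases h : Sum.inl ⁻¹' S = B ∧ Sum.inr ⁻¹' S = ({2, 3} : Set (Fin 4))
    · right
      rw [split_set S, h.1, h.2]
    · left
      refine ⟨h0, h1, h2, h3, h4, ?_⟩
      rintro hY (hX | hX)
      · exact h5 hY hX
      · exact h ⟨hX, hY⟩

lemma Dat.hex (D : Dat ψ a b A B m) (x : J ⊕ Fin 4)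
    (hx : x ∈ (Sum.inl '' B ∪ Sum.inr '' {2, 3} : Set (J ⊕ Fin 4))) (y : J ⊕ Fin 4)
    (hy : y ∉ (Sum.inl '' B ∪ Sum.inr '' {2, 3} : Set (J ⊕ Fin 4))) :
    GB K ψ m (fun X => X = A ∨ X = B) (fun X => X = A ∨ X = B)
      (insert y ((Sum.inl '' B ∪ Sum.inr '' {2, 3}) \ {x})) := by
  refine ⟨?_, ?_⟩
  · rw [Set.ncard_exchange hy hx, split_ncard, pre_inl, pre_inr, D.cB, Set.ncard_pair (by decide)]
  · rcases x with j | i <;> rcases y with k | l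
    · have hj : j ∈ B := by simpa using hx
      have hk : k ∉ B := by simpa using hy
      have e1 : Sum.inl ⁻¹' (insert (Sum.inl k) ((Sum.inl '' B ∪ Sum.inr '' {2, 3}) \
          {Sum.inl j} : Set (J ⊕ Fin 4))) = insert k (B \ {j}) := by
        ext; simp
      have e2 : Sum.inr ⁻¹' (insert (Sum.inl k) ((Sum.inl '' B ∪ Sum.inr '' {2, 3}) \
          {Sum.inl j} : Set (J ⊕ Fin 4))) = {2, 3} := by
        ext; simp
      rw [e1, e2]
      have hA : insert k (B \ {j}) ≠ A := by
        intro h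
        have h1 : (B \ {j}).Nonempty := by
          rw [← Set.ncard_pos, Set.ncard_sdiff_singleton_of_mem hj, D.cB]
          have := D.two
          omega
        obtain ⟨l, hl⟩ := h1
        have : l ∈ A := by rw [← h]; exact Or.inr hl
        exact D.notB this hl.1
      have hB : insert k (B \ {j}) ≠ B := by
        intro h
        apply hk
        rw [← h]
        exact Or.inl rfl
      refine ⟨D.insB sdiff_subset hk, ?_, ?_, fun _ => by simp [hA, hB], fun _ => by simp [hA, hB]⟩
      all_goals simp [fin4]
    · have hj : j ∈ B := by simpa using hx
      have hl : l = 0 ∨ l = 1 := by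
        simp at hy
        revert hy
        revert l
        decide
      have e1 : Sum.inl ⁻¹' (insert (Sum.inr l) ((Sum.inl '' B ∪ Sum.inr '' {2, 3}) \
          {Sum.inl j} : Set (J ⊕ Fin 4))) = B \ {j} := by
        ext; simp
      have e2 : Sum.inr ⁻¹' (insert (Sum.inr l) ((Sum.inl '' B ∪ Sum.inr '' {2, 3}) \
          {Sum.inl j} : Set (J ⊕ Fin 4))) = {l, 2, 3} := by
        ext; simp
      rw [e1, e2]
      refine ⟨D.liB.mono sdiff_subset, ?_, ?_, fun h => ?_, fun h => ?_⟩
      all_goals rcases hl with rfl | rfl <;> simp [fin4] at *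
    · have hi : i = 2 ∨ i = 3 := by simpa using hx
      have hk : k ∉ B := by simpa using hy
      have e1 : Sum.inl ⁻¹' (insert (Sum.inl k) ((Sum.inl '' B ∪ Sum.inr '' {2, 3}) \
          {Sum.inr i} : Set (J ⊕ Fin 4))) = insert k B := by
        ext; simp
      have e2 : Sum.inr ⁻¹' (insert (Sum.inl k) ((Sum.inl '' B ∪ Sum.inr '' {2, 3}) \
          {Sum.inr i} : Set (J ⊕ Fin 4))) = {2, 3} \ {i} := by
        ext; simp
      rw [e1, e2]
      refine ⟨D.insB subset_rfl hk, ?_, ?_, fun h => ?_, fun h => ?_⟩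
      all_goals rcases hi with rfl | rfl <;> simp [fin4] at *
    · have hi : i = 2 ∨ i = 3 := by simpa using hx
      have hl : l = 0 ∨ l = 1 := by
        simp at hy
        revert hy
        revert l
        decide
      have e1 : Sum.inl ⁻¹' (insert (Sum.inr l) ((Sum.inl '' B ∪ Sum.inr '' {2, 3}) \
          {Sum.inr i} : Set (J ⊕ Fin 4))) = B := by
        ext; simp
      have e2 : Sum.inr ⁻¹' (insert (Sum.inr l) ((Sum.inl '' B ∪ Sum.inr '' {2, 3}) \
          {Sum.inr i} : Set (J ⊕ Fin 4))) = insert l ({2, 3} \ {i}) := by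
        ext; simp
      rw [e1, e2]
      refine ⟨D.liB, ?_, ?_, fun h => ?_, fun h => ?_⟩
      all_goals rcases hi with rfl | rfl <;> rcases hl with rfl | rfl <;> simp [fin4] at *

end Core

section NonRep

lemma two_dim {K W : Type*} [Field K] [AddCommGroup W] [Module K W] {p q u v : W}
    (hu : u ∈ Submodule.span K {p, q}) (hv : v ∈ Submodule.span K {p, q}) (hu0 : u ≠ 0)
    (S : Submodule K W) (huS : u ∈ S) (hvS : v ∈ S) (hp : p ∉ S) : ∃ c : K, v = c • u := by
  rw [Submodule.mem_span_pair] at hu hv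
  obtain ⟨α, β, rfl⟩ := hu
  obtain ⟨γ, δ, rfl⟩ := hv
  have hβ : β ≠ 0 := by
    rintro rfl
    have hα : α ≠ 0 := by
      rintro rfl
      simp at hu0
    apply hp
    rw [zero_smul, add_zero] at huS
    exact (Submodule.smul_mem_iff _ hα).1 huS
  have h1 : β • (γ • p + δ • q) - δ • (α • p + β • q) ∈ S :=
    sub_mem (S.smul_mem _ hvS) (S.smul_mem _ huS)
  have e : β • (γ • p + δ • q) - δ • (α • p + β • q) = (β * γ - δ * α) • p := by module
  rw [e] at h1
  have h2 : β * γ - δ * α = 0 := by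
    by_contra h
    exact hp ((Submodule.smul_mem_iff _ h).1 h1)
  refine ⟨δ / β, ?_⟩
  have e3 : γ = δ / β * α := by field_simp; linear_combination h2
  have e4 : δ = δ / β * β := by field_simp
  rw [smul_add, smul_smul, smul_smul, ← e3, ← e4]

variable {J K W : Type} [Field K] [AddCommGroup W] [Module K W]

lemma inter_ne {ι : Type*} {θ : ι → W} {s t : Set ι} (hs : LinearIndepOn K θ s)
    (ht : LinearIndepOn K θ t) (hst : ¬ LinearIndepOn K θ (s ∪ t)) :
    ∃ p ∈ Submodule.span K (θ '' s), p ∈ Submodule.span K (θ '' t) ∧ p ≠ 0 := by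
  by_contra! h
  exact hst (hs.union ht (Submodule.disjoint_def.2 h))

/-- The linear algebra behind non-representability. -/
lemma no_rep {ι : Type*} (θ : ι → W) {A B : Set ι} {e0 e1 e2 e3 x : ι}
    (i02 : LinearIndepOn K θ (insert e0 (insert e2 A))) (n02 : e0 ∉ insert e2 A) (n2 : e2 ∉ A)
    (n3 : e3 ∉ insert e2 A)
    (i01 : LinearIndepOn K θ {e0, e1}) 
    (i23 : LinearIndepOn K θ (B ∪ {e2, e3})) (dB : Disjoint B {e2, e3})
    (ix : LinearIndepOn K θ (insert e0 (insert x A))) (nx : e0 ∉ insert x A)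
    (dA01 : ¬ LinearIndepOn K θ (A ∪ {e0, e1})) (dB01 : ¬ LinearIndepOn K θ (B ∪ {e0, e1}))
    (d4 : ¬ LinearIndepOn K θ ({e0, e1} ∪ {e2, e3}))
    (dA23 : ¬ LinearIndepOn K θ (insert e3 (insert e2 A)))
    (dAx : ∀ y ∈ B, y ∉ insert x A → ¬ LinearIndepOn K θ (insert y (insert x A))) : False := by
  have liA : LinearIndepOn K θ A := i02.mono (fun z hz => Or.inr (Or.inr hz))
  have liB : LinearIndepOn K θ B := i23.mono subset_union_left
  have li23 : LinearIndepOn K θ {e2, e3} := i23.mono subset_union_right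
  obtain ⟨p, hpA, hp, hp0⟩ := inter_ne liA i01 dA01
  obtain ⟨r, hrB, hr, hr0⟩ := inter_ne liB i01 dB01
  obtain ⟨q, hq, hq2, hq0⟩ := inter_ne i01 li23 d4
  rw [image_pair] at hp hr hq
  -- the hyperplane spanned by `A`, `B`
  have hx : θ e0 ∉ Submodule.span K (θ '' insert x A) := ((linearIndepOn_insert nx).1 ix).2
  have hB : Submodule.span K (θ '' B) ≤ Submodule.span K (θ '' insert x A) := by
    rw [Submodule.span_le]
    rintro _ ⟨y, hy, rfl⟩
    by_cases hyA : y ∈ insert x A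
    · exact Submodule.subset_span ⟨y, hyA, rfl⟩
    · by_contra hcon
      exact dAx y hy hyA ((linearIndepOn_insert hyA).2 ⟨ix.mono (Set.subset_insert _ _), hcon⟩)
  have hA : Submodule.span K (θ '' A) ≤ Submodule.span K (θ '' insert x A) :=
    Submodule.span_mono (image_mono (Set.subset_insert _ _))
  obtain ⟨c, hc⟩ := two_dim hp hr hp0 _ (hA hpA) (hB hrB) hx
  have h2 : θ e0 ∉ Submodule.span K (θ '' insert e2 A) := ((linearIndepOn_insert n02).1 i02).2
  have h3 : Submodule.span K (θ '' {e2, e3}) ≤ Submodule.span K (θ '' insert e2 A) := by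
    rw [Submodule.span_le]
    rintro _ ⟨y, rfl | rfl, rfl⟩
    · exact Submodule.subset_span ⟨_, Or.inl rfl, rfl⟩
    · by_contra hcon
      exact dA23 ((linearIndepOn_insert n3).2 ⟨i02.mono (Set.subset_insert _ _), hcon⟩)
  obtain ⟨c', hc'⟩ := two_dim hp hq hp0 _
    (Submodule.span_mono (image_mono (Set.subset_insert _ _)) hpA) (h3 hq2) h2
  have hc0 : c ≠ 0 := by rintro rfl; simp at hc; exact hr0 hc
  have hc0' : c' ≠ 0 := by rintro rfl; simp at hc'; exact hq0 hc'
  rw [hc, Submodule.smul_mem_iff _ hc0] at hrB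
  rw [hc', Submodule.smul_mem_iff _ hc0'] at hq2
  have hd := ((linearIndepOn_union_iff dB).1 i23).2.2
  exact hp0 (Submodule.disjoint_def.1 hd p hrB hq2)

end NonRep

section Main

variable {J K V : Type} [Finite J] [Field K] [AddCommGroup V] [Module K V] [FiniteDimensional K V]
  {ψ : J → V} {a b : V →ₗ[K] K} {A B : Set J} {m : ℕ}

lemma Dat.nonrep (D : Dat ψ a b A B m) {M : Matroid (J ⊕ Fin 4)} (hE : M.E = univ)
    (hM : ∀ S, M.IsBase S ↔ GB K ψ m (fun X => X = A ∨ X = B) (fun X => X = A) S) :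
    ¬ M.IsRepOver K := by
  rintro ⟨W, i1, i2, θ, hθ⟩
  have hI : ∀ S, LinearIndepOn K θ S ↔
      ∃ T, S ⊆ T ∧ GB K ψ m (fun X => X = A ∨ X = B) (fun X => X = A) T := by
    intro S
    have h1 := hθ S
    rw [hE] at h1
    have h2 : M.Indep S ↔ LinearIndepOn K θ S := h1.trans (by simp [LinearIndepOn])
    rw [← h2, Matroid.indep_iff]
    simp only [hM]
    exact exists_congr fun T => and_comm
  have hdep : ∀ (X : Set J) (Y : Set (Fin 4)), X.ncard + Y.ncard = m + 2 →
      ¬ Bs K ψ (fun X => X = A ∨ X = B) (fun X => X = A) X Y →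
      ¬ LinearIndepOn K θ (Sum.inl '' X ∪ Sum.inr '' Y) := by
    intro X Y hc hn hli
    obtain ⟨T, hT, hTB⟩ := (hI _).1 hli
    have heq : Sum.inl '' X ∪ Sum.inr '' Y = T := by
      refine Set.eq_of_subset_of_ncard_le hT ?_
      rw [hTB.1, split_ncard, pre_inl, pre_inr, hc]
    rw [← heq, GB_mk] at hTB
    exact hn hTB.2
  have hind : ∀ (X : Set J) (Y : Set (Fin 4)), X.ncard + Y.ncard = m + 2 →
      Bs K ψ (fun X => X = A ∨ X = B) (fun X => X = A) X Y →
      LinearIndepOn K θ (Sum.inl '' X ∪ Sum.inr '' Y) := by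
    intro X Y hc hn
    exact (hI _).2 ⟨_, subset_rfl, GB_mk.2 ⟨hc, hn⟩⟩
  obtain ⟨x, hxB⟩ := D.symm.neA
  have hxA : x ∉ A := D.symm.notB hxB
  obtain ⟨z, hzA⟩ := D.neA
  have hm := D.two
  refine no_rep (K := K) θ (A := Sum.inl '' A) (B := Sum.inl '' B) (e0 := Sum.inr 0) (e1 := Sum.inr 1)
    (e2 := Sum.inr 2) (e3 := Sum.inr 3) (x := Sum.inl x) ?_ (by simp) (by simp) (by simp) ?_ ?_ ?_
    ?_ (by simp) ?_ ?_ ?_ ?_ ?_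
  · have h := (hI _).2 ⟨_, subset_rfl, D.baseA (fun X => X = A ∨ X = B) (fun X => X = A)⟩
    convert h using 1
    ext (j | i) <;> simp
  · have h := hind (A \ {z}) {0, 1, 2} (by
      rw [Set.ncard_sdiff_singleton_of_mem hzA, D.cA, Set.ncard_eq_toFinset_card']
      have : ({0, 1, 2} : Set (Fin 4)).toFinset.card = 3 := by simp
      omega) ⟨D.liA.mono sdiff_subset, by simp [fin4], by simp [fin4], by simp [fin4],
        by simp [fin4]⟩
    refine h.mono ?_
    rintro _ (rfl | rfl) <;> simp
  · have h := hind B {2, 3} (by rw [D.cB, Set.ncard_pair (by decide)])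
      ⟨D.liB, by simp [fin4], by simp [fin4], by simp [fin4], fun _ => D.AneB.symm⟩
    convert h using 1
    rw [image_pair]
  · rw [Set.disjoint_left]
    rintro _ ⟨j, -, rfl⟩
    simp
  · have h := hind (insert x A) {0} (by
      rw [Set.ncard_insert_of_notMem hxA, D.cA, Set.ncard_singleton])
      ⟨D.symm.insB subset_rfl hxA, by simp [fin4], by simp [fin4], by simp [fin4], by simp [fin4]⟩
    convert h using 1
    ext (j | i) <;> simp
  · have h := hdep A {0, 1} (by rw [D.cA, Set.ncard_pair (by decide)])
      (fun h => h.2.2.2.1 rfl (Or.inl rfl))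
    rwa [image_pair] at h
  · have h := hdep B {0, 1} (by rw [D.cB, Set.ncard_pair (by decide)])
      (fun h => h.2.2.2.1 rfl (Or.inr rfl))
    rwa [image_pair] at h
  · intro h
    obtain ⟨T, hT, hTB⟩ := (hI _).1 h
    apply hTB.2.2.2.1
    rw [fin4]
    refine ⟨?_, ?_, ?_, ?_⟩ <;> simp only [Set.mem_preimage, Set.mem_univ, iff_true] <;> apply hT <;> simp
  · have h := hdep A {2, 3} (by rw [D.cA, Set.ncard_pair (by decide)])
      (fun h => h.2.2.2.2 rfl rfl)
    convert h using 2
    ext (j | i) <;> simp [or_comm]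
  · rintro _ ⟨y, hy, rfl⟩ hyx
    have hyx' : y ∉ insert x A := by simpa using hyx
    have h := hdep (insert y (insert x A)) ∅ (by
      rw [Set.ncard_insert_of_notMem hyx', Set.ncard_insert_of_notMem hxA, D.cA, Set.ncard_empty])
      (fun h => h.2.1 rfl)
    convert h using 2
    ext (j | i) <;> simp

lemma GB_congr {P1 P2 P1' P2' : Set J → Prop} {S : Set (J ⊕ Fin 4)}
    (h1 : (Sum.inr ⁻¹' S : Set (Fin 4)) = {0, 1} → (P1 (Sum.inl ⁻¹' S) ↔ P1' (Sum.inl ⁻¹' S)))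
    (h2 : (Sum.inr ⁻¹' S : Set (Fin 4)) = {2, 3} → (P2 (Sum.inl ⁻¹' S) ↔ P2' (Sum.inl ⁻¹' S))) :
    GB K ψ m P1 P2 S ↔ GB K ψ m P1' P2' S :=
  and_congr_right fun _ => Bs_congr (fun _ => h1) (fun _ => h2)

/-- The core construction. -/
theorem Dat.core [Infinite K] (D : Dat ψ a b A B m) : ∃ M : Matroid (J ⊕ Fin 4), M.E = univ ∧
    ¬ M.IsRepOver K ∧ (∀ P : Matroid (J ⊕ Fin 4), P.IsProperMinorOf M → P.IsRepOver K) ∧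
    ∀ X : Set J, M.Indep (Sum.inl '' X) ↔ LinearIndepOn K ψ X := by
  obtain ⟨Φ0, h0⟩ := D.fam0
  obtain ⟨Φ1, h1⟩ := D.fam1
  obtain ⟨Φ2, h2⟩ := D.fam2
  obtain ⟨M0, hE0, hR0, hB0⟩ := linMat Φ0 ⟨_, (h0 _).2 (D.baseA _ _)⟩
  obtain ⟨M1, hE1, hR1, hB1⟩ := linMat Φ1 ⟨_, (h1 _).2 (D.baseA _ _)⟩
  obtain ⟨M2, hE2, hR2, hB2⟩ := linMat Φ2 ⟨_, (h2 _).2 (D.baseA _ _)⟩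
  simp only [h0] at hB0
  simp only [h1] at hB1
  simp only [h2] at hB2
  have hexch : Matroid.ExchangeProperty
      (GB K ψ m (fun X => X = A ∨ X = B) (fun X => X = A ∨ X = B)) := by
    intro S T hS hT x hx
    rw [← hB0] at hS hT
    obtain ⟨y, hy, h⟩ := hS.exchange hT hx
    exact ⟨y, hy, (hB0 _).1 h⟩
  have hexch' := relax_exchange hexch (r := m + 2) (fun S hS => hS.1)
    (H := Sum.inl '' B ∪ Sum.inr '' {2, 3}) (by
      rw [split_ncard, pre_inl, pre_inr, D.cB, Set.ncard_pair (by decide)]) D.hex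
  obtain ⟨M, hE, hB'⟩ : ∃ M : Matroid (J ⊕ Fin 4), M.E = univ ∧ ∀ S, M.IsBase S ↔
      (GB K ψ m (fun X => X = A ∨ X = B) (fun X => X = A ∨ X = B) S ∨
      S = Sum.inl '' B ∪ Sum.inr '' {2, 3}) :=
    ⟨Matroid.ofIsBaseOfFinite (E := univ) (Set.toFinite _) _ ⟨_, Or.inr rfl⟩ hexch'
      (fun _ _ => subset_univ _), rfl, fun S => Iff.rfl⟩
  have hM : ∀ S, M.IsBase S ↔ GB K ψ m (fun X => X = A ∨ X = B) (fun X => X = A) S :=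
    fun S => (hB' S).trans (D.relax S)
  have bA := (hM _).2 (D.baseA _ _)
  have bB := (hM _).2 (D.baseB _ _)
  have hEE0 := hE.trans hE0.symm
  have hEE1 := hE.trans hE1.symm
  have hEE2 := hE.trans hE2.symm
  refine ⟨M, hE, D.nonrep hE hM, fun P hP => proper_minor_rep ?_ ?_ hP, ?_⟩
  · rintro (j | i) -
    · by_cases hj : j ∈ B
      · have hjA := D.symm.notB hj
        rw [del_eq hEE0 ⟨_, bA, by simpa using hjA⟩]
        · exact rep_del hR0 _
        · intro S hS
          rw [hM, hB0]
          have hX : Sum.inl ⁻¹' S ≠ B := by rintro rfl; exact hS hj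
          exact GB_congr (fun _ => Iff.rfl) (fun _ => by simp [hX])
      · have hjA := D.memA hj
        rw [del_eq hEE1 ⟨_, bB, by simpa using hj⟩]
        · exact rep_del hR1 _
        · intro S hS
          rw [hM, hB1]
          have hX : Sum.inl ⁻¹' S ≠ A := by rintro rfl; exact hS hjA
          exact GB_congr (fun _ => by simp [hX]) (fun _ => by simp [hX])
    · have hne : ∃ S, M.IsBase S ∧ Sum.inr i ∉ S := by
        have : i ∉ ({0, 2} : Set (Fin 4)) ∨ i ∉ ({1, 3} : Set (Fin 4)) := by
          fin_cases i <;> simp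
        rcases this with h | h
        · exact ⟨_, bA, by simpa using h⟩
        · exact ⟨_, bB, by simpa using h⟩
      by_cases hi : i ∈ ({0, 1} : Set (Fin 4))
      · rw [del_eq hEE2 hne]
        · exact rep_del hR2 _
        · intro S hS
          rw [hM, hB2]
          refine GB_congr (fun hY => ?_) (fun _ => Iff.rfl)
          rw [← hY] at hi
          exact absurd hi hS
      · have hi' : i ∈ ({2, 3} : Set (Fin 4)) := by
          revert hi
          fin_cases i <;> simp
        rw [del_eq hEE0 hne]
        · exact rep_del hR0 _
        · intro S hS
          rw [hM, hB0]
          refine GB_congr (fun _ => Iff.rfl) (fun hY => ?_)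
          rw [← hY] at hi'
          exact absurd hi' hS
  · rintro (j | i) hjE
    · by_cases hj : j ∈ B
      · have hjA := D.symm.notB hj
        rw [con_eq hEE1 hjE ⟨_, bB, by simpa using hj⟩]
        · exact rep_con hR1 _
        · intro S hS
          rw [hM, hB1]
          have hX : Sum.inl ⁻¹' S ≠ A := by rintro rfl; exact hjA hS
          exact GB_congr (fun _ => by simp [hX]) (fun _ => by simp [hX])
      · have hjA := D.memA hj
        rw [con_eq hEE0 hjE ⟨_, bA, by simpa using hjA⟩]
        · exact rep_con hR0 _
        · intro S hS
          rw [hM, hB0]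
          have hX : Sum.inl ⁻¹' S ≠ B := by rintro rfl; exact hj hS
          exact GB_congr (fun _ => Iff.rfl) (fun _ => by simp [hX])
    · have hne : ∃ S, M.IsBase S ∧ Sum.inr i ∈ S := by
        have : i ∈ ({0, 2} : Set (Fin 4)) ∨ i ∈ ({1, 3} : Set (Fin 4)) := by
          fin_cases i <;> simp
        rcases this with h | h
        · exact ⟨_, bA, by simpa using h⟩
        · exact ⟨_, bB, by simpa using h⟩
      by_cases hi : i ∈ ({0, 1} : Set (Fin 4))
      · rw [con_eq hEE0 hjE hne]
        · exact rep_con hR0 _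
        · intro S hS
          rw [hM, hB0]
          refine GB_congr (fun _ => Iff.rfl) (fun hY => ?_)
          have hi2 : i ∈ (Sum.inr ⁻¹' S : Set (Fin 4)) := hS
          rw [hY] at hi2
          rcases hi with rfl | rfl <;> simp at hi2
      · rw [con_eq hEE2 hjE hne]
        · exact rep_con hR2 _
        · intro S hS
          rw [hM, hB2]
          refine GB_congr (fun hY => ?_) (fun _ => Iff.rfl)
          have hi2 : i ∈ (Sum.inr ⁻¹' S : Set (Fin 4)) := hS
          rw [hY] at hi2
          exact absurd hi2 hi
  · intro X
    constructor
    · intro h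
      obtain ⟨T, hT, hXT⟩ := h.exists_isBase_superset
      rw [hM] at hT
      exact hT.2.1.mono (fun j hj => hXT ⟨j, hj, rfl⟩)
    · intro h
      obtain ⟨x, hxB⟩ := D.symm.neA
      have hxA : x ∉ A := D.symm.notB hxB
      obtain ⟨T, hXT, hT, hTc⟩ := li_extend ψ h (D.symm.insB subset_rfl hxA)
        (by rw [Set.ncard_insert_of_notMem hxA, D.cA, D.dim])
      have hb : M.IsBase (Sum.inl '' T ∪ Sum.inr '' {0}) := by
        rw [hM, GB_mk, hTc, D.dim, Set.ncard_singleton]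
        exact ⟨rfl, hT, by simp [fin4], by simp [fin4], by simp [fin4], by simp [fin4]⟩
      exact hb.indep.subset ((image_mono hXT).trans subset_union_left)

end Main

section Build

variable {E ι K W : Type} [Fintype E] [DecidableEq E] [Fintype ι] [Field K] [AddCommGroup W]
  [Module K W]

/-- The vectors used to embed a given representable matroid. -/
noncomputable def emb (φ : E → W) (w : Basis ι K W) :
    (E ⊕ Unit ⊕ ι) ⊕ (E ⊕ Unit ⊕ ι) → W × (E → K) × K × K :=
  Sum.elim
    (Sum.elim (fun e => (φ e, Pi.single e 1, 1, 1))
      (Sum.elim (fun _ => (0, 0, 0, 1)) (fun i => (w i, 0, 0, 1))))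
    (Sum.elim (fun e => (0, Pi.single e 1, 0, 0))
      (Sum.elim (fun _ => (0, 0, 1, 0)) (fun i => (w i, 0, 1, 0))))

/-- The contracted elements. -/
def cmap (E ι : Type) : E ⊕ Unit ⊕ Unit → (E ⊕ Unit ⊕ ι) ⊕ (E ⊕ Unit ⊕ ι) :=
  Sum.elim (fun e => Sum.inr (Sum.inl e))
    (Sum.elim (fun _ => Sum.inr (Sum.inr (Sum.inl ()))) (fun _ => Sum.inl (Sum.inr (Sum.inl ()))))

lemma cmap_inj : Function.Injective (cmap E ι) := by
  rintro (x | x | x) (y | y | y) h <;> simp [cmap] at h ⊢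
  exact h

lemma emb_liA (φ : E → W) (w : Basis ι K W) : LinearIndepOn K (emb φ w) (range Sum.inl) := by
  rw [linearIndepOn_range_iff Sum.inl_injective, Fintype.linearIndependent_iff]
  intro g hg
  simp only [Fintype.sum_sum_type, Function.comp, emb, Sum.elim_inl, Sum.elim_inr] at hg
  have h1 : ∀ e, g (Sum.inl e) = 0 := by
    intro e
    have := congrArg (fun v => v.2.1 e) hg
    simpa [Prod.fst_sum, Prod.snd_sum, Finset.sum_apply, Pi.single_apply] using this
  have h2 : ∀ i, g (Sum.inr (Sum.inr i)) = 0 := by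
    have := congrArg (fun v => v.1) hg
    simp [Prod.fst_sum, Prod.snd_sum, h1] at this
    exact Fintype.linearIndependent_iff.1 w.linearIndependent _ this
  have h3 : g (Sum.inr (Sum.inl ())) = 0 := by
    have := congrArg (fun v => v.2.2.2) hg
    simpa [Prod.fst_sum, Prod.snd_sum, h1, h2] using this
  rintro (e | ⟨⟩ | i)
  · exact h1 e
  · exact h3
  · exact h2 i

lemma emb_liB (φ : E → W) (w : Basis ι K W) : LinearIndepOn K (emb φ w) (range Sum.inr) := by
  rw [linearIndepOn_range_iff Sum.inr_injective, Fintype.linearIndependent_iff]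
  intro g hg
  simp only [Fintype.sum_sum_type, Function.comp, emb, Sum.elim_inl, Sum.elim_inr] at hg
  have h1 : ∀ e, g (Sum.inl e) = 0 := by
    intro e
    have := congrArg (fun v => v.2.1 e) hg
    simpa [Prod.fst_sum, Prod.snd_sum, Finset.sum_apply, Pi.single_apply] using this
  have h2 : ∀ i, g (Sum.inr (Sum.inr i)) = 0 := by
    have := congrArg (fun v => v.1) hg
    simp [Prod.fst_sum, Prod.snd_sum, h1] at this
    exact Fintype.linearIndependent_iff.1 w.linearIndependent _ this
  have h3 : g (Sum.inr (Sum.inl ())) = 0 := by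
    have := congrArg (fun v => v.2.2.1) hg
    simpa [Prod.fst_sum, Prod.snd_sum, h1, h2] using this
  rintro (e | ⟨⟩ | i)
  · exact h1 e
  · exact h3
  · exact h2 i

lemma emb_liC (φ : E → W) (w : Basis ι K W) : LinearIndepOn K (emb φ w) (range (cmap E ι)) := by
  rw [linearIndepOn_range_iff cmap_inj, Fintype.linearIndependent_iff]
  intro g hg
  simp only [Fintype.sum_sum_type, Function.comp, emb, cmap, Sum.elim_inl, Sum.elim_inr] at hg
  have h1 : ∀ e, g (Sum.inl e) = 0 := by
    intro e
    have := congrArg (fun v => v.2.1 e) hg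
    simpa [Prod.fst_sum, Prod.snd_sum, Finset.sum_apply, Pi.single_apply] using this
  have h2 : g (Sum.inr (Sum.inr ())) = 0 := by
    have := congrArg (fun v => v.2.2.2) hg
    simpa [Prod.fst_sum, Prod.snd_sum, h1] using this
  have h3 : g (Sum.inr (Sum.inl ())) = 0 := by
    have := congrArg (fun v => v.2.2.1) hg
    simpa [Prod.fst_sum, Prod.snd_sum, h1, h2] using this
  rintro (e | ⟨⟩ | ⟨⟩)
  · exact h1 e
  · exact h3
  · exact h2

lemma emb_spanC (φ : E → W) (w : Basis ι K W) :
    Submodule.span K (emb φ w '' range (cmap E ι)) =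
      LinearMap.ker (LinearMap.fst K W ((E → K) × K × K)) := by
  apply le_antisymm
  · rw [Submodule.span_le]
    rintro _ ⟨_, ⟨(e | ⟨⟩ | ⟨⟩), rfl⟩, rfl⟩ <;> simp [cmap, emb]
  · rintro ⟨v, x, y, z⟩ hv
    have hv : v = 0 := hv
    subst hv
    have e : ((0, x, y, z) : W × (E → K) × K × K) =
        ∑ e, x e • emb φ w (cmap E ι (Sum.inl e)) + y • emb φ w (cmap E ι (Sum.inr (Sum.inl ()))) +
          z • emb φ w (cmap E ι (Sum.inr (Sum.inr ()))) := by
      simp only [emb, cmap, Sum.elim_inl, Sum.elim_inr]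
      ext i
      · simp [Prod.fst_sum, Prod.snd_sum]
      · simp [Prod.fst_sum, Prod.snd_sum, Finset.sum_apply, Pi.single_apply]
      · simp [Prod.fst_sum, Prod.snd_sum]
      · simp [Prod.fst_sum, Prod.snd_sum]
    rw [e]
    have hm : ∀ c, emb φ w (cmap E ι c) ∈ Submodule.span K (emb φ w '' range (cmap E ι)) :=
      fun c => Submodule.subset_span ⟨_, ⟨c, rfl⟩, rfl⟩
    exact add_mem (add_mem (sum_mem fun e _ => Submodule.smul_mem _ _ (hm _))
      (Submodule.smul_mem _ _ (hm _))) (Submodule.smul_mem _ _ (hm _))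

lemma emb_contract (φ : E → W) (w : Basis ι K W) (I : Set E) :
    LinearIndepOn K (emb φ w) (range (cmap E ι) ∪ (fun e => Sum.inl (Sum.inl e)) '' I) ↔
      LinearIndepOn K φ I := by
  have hdisj : Disjoint (range (cmap E ι)) ((fun e => Sum.inl (Sum.inl e)) '' I) := by
    rw [Set.disjoint_left]
    rintro _ ⟨(e | ⟨⟩ | ⟨⟩), rfl⟩ ⟨e', -, h⟩ <;> simp [cmap] at h
  rw [linearIndepOn_union_iff_quotient hdisj, and_iff_right (emb_liC φ w), emb_spanC,
    li_image (fun a b h => by simpa using h)]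
  have hinj : LinearMap.ker ((LinearMap.ker (LinearMap.fst K W ((E → K) × K × K))).liftQ
      (LinearMap.fst K W ((E → K) × K × K)) le_rfl) = ⊥ :=
    Submodule.ker_liftQ_eq_bot _ _ _ le_rfl
  rw [← LinearMap.linearIndepOn_iff_of_injOn _ (LinearMap.ker_eq_bot.1 hinj).injOn]
  rfl

/-- The data for the core construction. -/
lemma emb_dat [Nonempty ι] (φ : E → W) (w : Basis ι K W) :
    ∃ a b m, Dat (K := K) (emb φ w) a b (range Sum.inl) (range Sum.inr) m := by
  have : FiniteDimensional K W := w.finiteDimensional_of_finite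
  let a : W × (E → K) × K × K →ₗ[K] K :=
    LinearMap.fst K K K ∘ₗ LinearMap.snd K (E → K) (K × K) ∘ₗ LinearMap.snd K W _ -
      (∑ e, LinearMap.proj e) ∘ₗ LinearMap.fst K (E → K) (K × K) ∘ₗ LinearMap.snd K W _
  let b : W × (E → K) × K × K →ₗ[K] K :=
    LinearMap.snd K K K ∘ₗ LinearMap.snd K (E → K) (K × K) ∘ₗ LinearMap.snd K W _
  refine ⟨a, b, Fintype.card E + 1 + Fintype.card ι, ?_, ?_, ?_, emb_liA φ w, emb_liB φ w,
    ?_, ?_, ?_, ?_, ?_, ?_⟩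
  · rw [finrank_prod, finrank_prod, finrank_prod, finrank_self, finrank_fintype_fun_eq_card,
      finrank_eq_card_basis w]
    omega
  · have := Fintype.card_pos (α := ι)
    omega
  · exact range_inl_union_range_inr
  · rw [← Set.image_univ, ncard_image_of_injective _ Sum.inl_injective, Set.ncard_univ]
    simp
    omega
  · rw [← Set.image_univ, ncard_image_of_injective _ Sum.inr_injective, Set.ncard_univ]
    simp
    omega
  · rintro _ ⟨(e | ⟨⟩ | i), rfl⟩ <;> simp [a, emb]
  · rintro _ ⟨(e | ⟨⟩ | i), rfl⟩ <;> simp [b, emb]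
  · rintro _ ⟨(e | ⟨⟩ | i), rfl⟩ <;> simp [b, emb]
  · rintro _ ⟨(e | ⟨⟩ | i), rfl⟩ <;> simp [a, emb]

end Build

theorem final {α : Type} (K : Type) [Field K] [Infinite K]
    (N : Matroid α) [N.Finite] (hN : N.IsRepOver K) :
    ∃ (β : Type) (M : Matroid β), M.Finite ∧ ¬ M.IsRepOver K ∧
      (∀ P : Matroid β, P.IsProperMinorOf M → P.IsRepOver K) ∧
      ∃ N' : Matroid β, N'.IsMinorOf M ∧ N.IsIsoTo N' := by
  classical
  obtain ⟨W, i1, i2, φ0, hφ0⟩ := hN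
  have hfin : N.E.Finite := N.ground_finite
  have : Fintype N.E := hfin.fintype
  let W1 := Submodule.span K (φ0 '' N.E)
  have : FiniteDimensional K W1 := FiniteDimensional.span_of_finite K (hfin.image _)
  let φ1 : N.E → W1 := fun e => ⟨φ0 e, Submodule.subset_span ⟨e, e.2, rfl⟩⟩
  let φ : N.E → W1 × K := fun e => (φ1 e, 0)
  let w := finBasis K (W1 × K)
  have hpos : 0 < finrank K (W1 × K) := by rw [finrank_prod, finrank_self]; omega
  have : Nonempty (Fin (finrank K (W1 × K))) := ⟨⟨0, hpos⟩⟩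
  have hφ : ∀ I : Set N.E, N.Indep (Subtype.val '' I) ↔ LinearIndepOn K φ I := by
    intro I
    rw [hφ0, and_iff_right (by rintro _ ⟨e, -, rfl⟩; exact e.2)]
    change LinearIndepOn K φ0 (Subtype.val '' I) ↔ _
    rw [li_image Subtype.val_injective]
    have e1 : φ0 ∘ Subtype.val = W1.subtype ∘ φ1 := rfl
    have e2 : φ = LinearMap.inl K W1 K ∘ φ1 := rfl
    rw [e1, e2, LinearMap.linearIndepOn_iff_of_injOn _ W1.subtype_injective.injOn,
      LinearMap.linearIndepOn_iff_of_injOn _ LinearMap.inl_injective.injOn]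
  obtain ⟨a, b, m, D⟩ := emb_dat φ w
  obtain ⟨M, hE, hnr, hpm, hI⟩ := D.core
  refine ⟨_, M, ⟨Set.toFinite _⟩, hnr, hpm, ?_⟩
  let C : Set (((N.E ⊕ Unit ⊕ Fin (finrank K (W1 × K))) ⊕
    (N.E ⊕ Unit ⊕ Fin (finrank K (W1 × K)))) ⊕ Fin 4) := Sum.inl '' range (cmap N.E _)
  let f1 : N.E → ((N.E ⊕ Unit ⊕ Fin (finrank K (W1 × K))) ⊕
    (N.E ⊕ Unit ⊕ Fin (finrank K (W1 × K)))) ⊕ Fin 4 := fun e => Sum.inl (Sum.inl (Sum.inl e))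
  have hf1 : Function.Injective f1 := fun x y h => by simpa [f1] using h
  let f : α → ((N.E ⊕ Unit ⊕ Fin (finrank K (W1 × K))) ⊕
    (N.E ⊕ Unit ⊕ Fin (finrank K (W1 × K)))) ⊕ Fin 4 :=
    fun x => if h : x ∈ N.E then f1 ⟨x, h⟩ else Sum.inr 0
  have hff : ∀ e : N.E, f e = f1 e := fun e => by simp [f]
  have hdisj : Disjoint (range f1) C := by
    rw [Set.disjoint_left]
    rintro _ ⟨e, rfl⟩ ⟨_, ⟨(c | ⟨⟩ | ⟨⟩), rfl⟩, h⟩ <;> simp [cmap, f1] at h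
  let D' := univ \ (range f1 ∪ C)
  have hCD : Disjoint C D' := by
    rw [Set.disjoint_left]
    intro x hx hx'
    exact hx'.2 (Or.inr hx)
  have hgr : (M ／ C ＼ D').E = range f1 := by
    rw [Matroid.delete_ground, Matroid.contract_ground, hE]
    ext x
    have : x ∈ range f1 → x ∉ C := fun h => Set.disjoint_left.1 hdisj h
    simp only [D', Set.mem_sdiff, Set.mem_univ, true_and, Set.mem_union]
    tauto
  have hCi : M.Indep C := (hI _).2 (emb_liC φ w)
  refine ⟨M ／ C ＼ D', ⟨C, D', by rw [hE]; exact subset_univ _, by rw [hE]; exact subset_univ _,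
    hCD, rfl⟩, f, ?_, ?_⟩
  · rw [hgr]
    refine ⟨fun x hx => ?_, fun x hx y hy h => ?_, ?_⟩
    · exact ⟨⟨x, hx⟩, (hff ⟨x, hx⟩).symm⟩
    · have h' : f1 ⟨x, hx⟩ = f1 ⟨y, hy⟩ := by rw [← hff, ← hff]; exact h
      exact congrArg Subtype.val (hf1 h')
    · rintro _ ⟨e, rfl⟩
      exact ⟨e, e.2, hff e⟩
  · intro I hIE
    obtain ⟨I', rfl⟩ : ∃ I' : Set N.E, I = Subtype.val '' I' :=
      ⟨Subtype.val ⁻¹' I, by rw [Subtype.image_preimage_coe, Set.inter_eq_right.2 hIE]⟩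
    have hfi : f '' (Subtype.val '' I') = f1 '' I' := by
      rw [Set.image_image]
      exact image_congr fun e _ => hff e
    have hsub : f1 '' I' ⊆ range f1 := image_subset_range _ _
    have hdD : Disjoint (f1 '' I') D' := by
      rw [Set.disjoint_left]
      intro x hx hx'
      exact hx'.2 (Or.inl (hsub hx))
    rw [hφ, hfi, Matroid.delete_indep_iff, and_iff_left hdD, hCi.contract_indep_iff,
      and_iff_right (hdisj.mono_left hsub), ← emb_contract φ w, ← hI, Set.image_union, Set.image_image,
      Set.union_comm]

end ExMin

/-- For an infinite field `𝕂`, every finite `𝕂`-representable matroid is (up to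
isomorphism) a minor of an excluded minor for `𝕂`-representability. -/
theorem Matroid.exists_excludedMinor_rep {α : Type} (𝕂 : Type) [Field 𝕂] [Infinite 𝕂]
    (N : Matroid α) [N.Finite] (hN : N.IsRepOver 𝕂) :
    ∃ (β : Type) (M : Matroid β), M.Finite ∧ ¬ M.IsRepOver 𝕂 ∧
      (∀ P : Matroid β, P.IsProperMinorOf M → P.IsRepOver 𝕂) ∧
      ∃ N' : Matroid β, N'.IsMinorOf M ∧ N.IsIsoTo N' := by
  exact ExMin.final 𝕂 N hN
end
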